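/- arXiv:2410.08859 — 4 statements merged into one kernel-verified Lean document; each statement's English description precedes it below -/
import Mathlib

section
/- Let X, Y, μ, ν, c, ε, φ₁, φ₂ (satisfying Assumption A) and partitions 𝒥_A, 𝒥_B of X be as in the parallel domain decomposition setting. Let Θ₀ be a weight rule that is continuous and strictly decreases the global objective E on every non-fixed point (i.e. Θ₀ satisfies the hypotheses of the convergence theorem for continuous weight rules), and let Θ be any weight rule that performs at least as well as Θ₀: for every plan π with E(π) < ∞ and every partition 𝒥 ∈ {𝒥_A, 𝒥_B}, if π̄ and π̄₀ denote the parallel updates of π using weights Θ((π_J)_J,(π̃_J)_J) and Θ₀((π_J)_J,(π̃_J)_J) respectively (with π_J := π|_{X_J×Y} and π̃_J := S_J(π)), then E(π̄) ≤ E(π̄₀). Then the parallel domain decomposition iterates generated with weight rule Θ, alternating the partitions 𝒥_A and 𝒥_B from any initial plan π⁰ with E(π⁰) < ∞, converge pointwise to the unique global minimizer of E. -/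
open Filter Topology
open scoped Classical

noncomputable section

/-- `φ : ℝ → ℝ ∪ {+∞}` is an entropy function: lower semicontinuous, convex,
`dom(φ) ⊆ [0,∞)`, `dom(φ)\{0} ≠ ∅`, never taking the value `-∞`. -/
def IsEntropyFn (φ : ℝ → EReal) : Prop :=
  LowerSemicontinuous φ ∧
  (∀ x y a b : ℝ, 0 ≤ a → 0 ≤ b → a + b = 1 →
      φ (a * x + b * y) ≤ (a : EReal) * φ x + (b : EReal) * φ y) ∧
  (∀ x : ℝ, φ x ≠ ⊥) ∧
  (∀ x : ℝ, φ x < ⊤ → 0 ≤ x) ∧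
  (∃ x : ℝ, x ≠ 0 ∧ φ x < ⊤)

/-- The recession slope `φ'_∞ = lim_{x→∞} φ(x)/x`. -/
def recessionSlope (φ : ℝ → EReal) : EReal :=
  Filter.limsup (fun x : ℝ => φ x * ((x⁻¹ : ℝ) : EReal)) Filter.atTop

/-- The `φ`-divergence on a finite set `Z`:
`D_φ(ρ|σ) = ∑_{z : σ z > 0} σ z · φ(ρ z / σ z) + φ'_∞ · ∑_{z : σ z = 0} ρ z`. -/
def divergence {Z : Type*} [Fintype Z] (φ : ℝ → EReal) (ρ σ : Z → ℝ) : EReal :=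
  (∑ z, if 0 < σ z then (σ z : EReal) * φ (ρ z / σ z) else 0)
    + recessionSlope φ * ((∑ z, if σ z = 0 then ρ z else 0 : ℝ) : EReal)

/-- The convex conjugate `φ*(z) = sup_{x ∈ ℝ} (z·x − φ(x))`. -/
def conjFn (φ : ℝ → EReal) (z : ℝ) : EReal :=
  ⨆ x : ℝ, (((z * x : ℝ) : EReal) - φ x)

/-- Kullback–Leibler divergence on a finite set, with `0·log 0 = 0`:
`KL(ρ|σ) = ∑ z (ρ z log(ρ z/σ z) − ρ z + σ z)` if `ρ ≪ σ`, else `+∞`. -/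
def KLfin {Z : Type*} [Fintype Z] (ρ σ : Z → ℝ) : EReal :=
  if ∀ z, σ z = 0 → ρ z = 0 then
    ((∑ z, (ρ z * Real.log (ρ z / σ z) - ρ z + σ z) : ℝ) : EReal)
  else ⊤

/-- Assumption A: the entropy function `φ` is nonnegative, finite on `[0,∞)`,
and continuously differentiable on the interior `(0,∞)` of its domain. -/
def AssumptionA (φ : ℝ → EReal) : Prop :=
  IsEntropyFn φ ∧ (∀ x : ℝ, 0 ≤ φ x) ∧ (∀ x : ℝ, 0 ≤ x → φ x ≠ ⊤) ∧
  ContDiffOn ℝ 1 (fun s : ℝ => (φ s).toReal) (Set.Ioi (0 : ℝ))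

/-- Primal objective of the unbalanced (cell) problem with `Y`-submarginal `νm`:
`E_J(π|νm) = ⟨c, π⟩ + ε KL(π | μ⊗ν) + D_{φ₁}(P_X π | μ) + D_{φ₂}(P_Y π + νm | ν)`. -/
def EJfun {W Y : Type*} [Fintype W] [Fintype Y]
    (c : W → Y → ℝ) (ε : ℝ) (φ₁ φ₂ : ℝ → EReal)
    (μ : W → ℝ) (ν : Y → ℝ) (νm : Y → ℝ) (π : W → Y → ℝ) : EReal :=
  ((∑ x, ∑ y, c x y * π x y : ℝ) : EReal)
    + (ε : EReal) * KLfin (fun p : W × Y => π p.1 p.2) (fun p : W × Y => μ p.1 * ν p.2)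
    + divergence φ₁ (fun x => ∑ y, π x y) μ
    + divergence φ₂ (fun y => (∑ x, π x y) + νm y) ν

/-- Dual objective of the unbalanced (cell) problem with `Y`-submarginal `νm`. -/
def DJfun {W Y : Type*} [Fintype W] [Fintype Y]
    (c : W → Y → ℝ) (ε : ℝ) (φ₁ φ₂ : ℝ → EReal)
    (μ : W → ℝ) (ν : Y → ℝ) (νm : Y → ℝ) (α : W → ℝ) (β : Y → ℝ) : EReal :=
  ((ε * ∑ x, ∑ y, (1 - Real.exp ((α x + β y - c x y) / ε)) * (μ x * ν y) : ℝ) : EReal)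
    - (∑ x, (μ x : EReal) * conjFn φ₁ (-(α x)))
    - (∑ y, (ν y : EReal) * conjFn φ₂ (-(β y)))
    - ((∑ y, β y * νm y : ℝ) : EReal)

/-- The `Y`-submarginal `ν_{-J}` of the plan `π` outside the cell `J`:
`ν_{-J}(y) = ∑_{x ∉ J} π(x,y)`. -/
def outMarg {X Y : Type*} [Fintype X] (J : Set X) (π : X → Y → ℝ) : Y → ℝ :=
  fun y => ∑ x, (Jᶜ).indicator (fun x' => π x' y) x

/-- The global unbalanced objective
`E(π) = ⟨c, π⟩ + ε KL(π|μ⊗ν) + D_{φ₁}(P_X π|μ) + D_{φ₂}(P_Y π|ν)`. -/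
def Eglobal {X Y : Type*} [Fintype X] [Fintype Y]
    (c : X → Y → ℝ) (ε : ℝ) (φ₁ φ₂ : ℝ → EReal)
    (μ : X → ℝ) (ν : Y → ℝ) (π : X → Y → ℝ) : EReal :=
  EJfun c ε φ₁ φ₂ μ ν (fun _ => 0) π

/-- An indexed family `Js : Fin n → Set X` is a partition of `X` into nonempty
subsets. -/
def IsFinPartition {X : Type*} {n : ℕ} (Js : Fin n → Set X) : Prop :=
  (∀ i, (Js i).Nonempty) ∧ (⋃ i, Js i) = Set.univ ∧
    ∀ i j, i ≠ j → Disjoint (Js i) (Js j)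

/-- `update` implements one cell update: `update J π` agrees with `π` outside
`J × Y` and its restriction to `J × Y` is the (unique) minimizer of the cell
subproblem `E_J(·|ν_{-J})` with `ν_{-J}(y) = ∑_{x ∉ J} π(x,y)`. -/
def IsCellUpdate {X Y : Type*} [Fintype X] [Fintype Y]
    (c : X → Y → ℝ) (ε : ℝ) (φ₁ φ₂ : ℝ → EReal) (μ : X → ℝ) (ν : Y → ℝ)
    (update : Set X → (X → Y → ℝ) → (X → Y → ℝ)) : Prop :=
  ∀ (J : Set X) (π : X → Y → ℝ), (∀ x y, 0 ≤ π x y) →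
    (∀ x y, 0 ≤ update J π x y) ∧
    (∀ x, x ∉ J → ∀ y, update J π x y = π x y) ∧
    ∀ π' : ↥J → Y → ℝ, (∀ (j : J) (y : Y), 0 ≤ π' j y) →
      EJfun (fun (j : J) y => c j y) ε φ₁ φ₂ (fun (j : J) => μ j) ν (outMarg J π)
          (fun (j : J) y => update J π j y)
        ≤ EJfun (fun (j : J) y => c j y) ε φ₁ φ₂ (fun (j : J) => μ j) ν (outMarg J π) π'

/-- One sequential domain decomposition sweep: cycle through the cells of the
partition in their fixed order, updating the current plan after each cell. -/
def sweep {X Y : Type*} (update : Set X → (X → Y → ℝ) → (X → Y → ℝ))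
    {n : ℕ} (Js : Fin n → Set X) (π : X → Y → ℝ) : X → Y → ℝ :=
  (List.ofFn Js).foldl (fun p J => update J p) π

/-- The restriction of a plan to the cell `J × Y`, extended by zero. -/
def cellRestr {X Y : Type*} (J : Set X) (π : X → Y → ℝ) : X → Y → ℝ :=
  fun x y => J.indicator (fun x' => π x' y) x

/-- Convex combination `∑_J (1 − θ_J) π_J + θ_J π̃_J` of cell plans. -/
def combPlan {X Y : Type*} {n : ℕ}
    (πJ tπ : Fin n → X → Y → ℝ) (θ : Fin n → ℝ) : X → Y → ℝ :=
  fun x y => ∑ i, ((1 - θ i) * πJ i x y + θ i * tπ i x y)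

/-- `S i π` is the unique minimizer of the cell subproblem on cell `Js i`
with `Y`-submarginal `ν_{-J}(y) = ∑_{x ∉ Js i} π(x,y)`, extended by zero. -/
def IsSolveMap {X Y : Type*} [Fintype X] [Fintype Y]
    (c : X → Y → ℝ) (ε : ℝ) (φ₁ φ₂ : ℝ → EReal) (μ : X → ℝ) (ν : Y → ℝ)
    {n : ℕ} (Js : Fin n → Set X)
    (S : Fin n → (X → Y → ℝ) → (X → Y → ℝ)) : Prop :=
  ∀ (i : Fin n) (π : X → Y → ℝ), (∀ x y, 0 ≤ π x y) →
    (∀ x y, 0 ≤ S i π x y) ∧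
    (∀ x, x ∉ Js i → ∀ y, S i π x y = 0) ∧
    ∀ π' : ↥(Js i) → Y → ℝ, (∀ (j : Js i) (y : Y), 0 ≤ π' j y) →
      EJfun (fun (j : Js i) y => c j y) ε φ₁ φ₂ (fun (j : Js i) => μ j) ν
          (outMarg (Js i) π) (fun (j : Js i) y => S i π j y)
        ≤ EJfun (fun (j : Js i) y => c j y) ε φ₁ φ₂ (fun (j : Js i) => μ j) ν
          (outMarg (Js i) π) π'

/-- One parallel domain decomposition iteration with weight rule `Θ`: solve all
cell subproblems in parallel and take the convex combination of old and new cell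
plans with weights `Θ((π_J)_J, (π̃_J)_J)`. -/
def parUpdate {X Y : Type*} {n : ℕ} (Js : Fin n → Set X)
    (S : Fin n → (X → Y → ℝ) → (X → Y → ℝ))
    (Θ : (Fin n → X → Y → ℝ) → (Fin n → X → Y → ℝ) → Fin n → ℝ)
    (π : X → Y → ℝ) : X → Y → ℝ :=
  combPlan (fun i => cellRestr (Js i) π) (fun i => S i π)
    (Θ (fun i => cellRestr (Js i) π) (fun i => S i π))

/-!
On nonnegative plans `E` is a real-valued, continuous, strictly convex function with compact
sublevel sets: the entropies are nonnegative, and `KL` dominates every linear function. Hence each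
cell subproblem has a unique minimizer, which by Berge's maximum theorem depends continuously on
`π`, and a continuous weight rule `Θ₀` makes `Φ π = E (parallel update of π)` continuous as well.

The values of `E` along the iterates decrease to some `L`. At a cluster point `p` of the steps using
the partition `𝒥_A`, the comparison gives `E p = L ≤ Φ p`, so `p` is fixed by every cell solve. Such
a `p` is positive, because `x log x` has slope `-∞` at `0`; there `E` is differentiable, and the
optimality in each cell makes all of its partial derivatives vanish, so `p` minimizes `E`. Therefore
`L = min E`, and every cluster point of the iterates is the unique minimizer.
-/

theorem apply_add_smul_le_of_convexOn {E : Type*} [AddCommGroup E] [Module ℝ E] {s : Set E}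
    {f : E → ℝ} (hf : ConvexOn ℝ s f) {p v : E} (hp : p ∈ s) (hpv : p + v ∈ s) {t : ℝ}
    (ht0 : 0 ≤ t) (ht1 : t ≤ 1) : f (p + t • v) ≤ f p + t * (f (p + v) - f p) := by
  calc f (p + t • v) = f ((1 - t) • p + t • (p + v)) := by congr 1; module
    _ ≤ (1 - t) • f p + t • f (p + v) := hf.2 hp hpv (sub_nonneg.2 ht1) ht0 (sub_add_cancel 1 t)
    _ = f p + t * (f (p + v) - f p) := by simp only [smul_eq_mul]; ring

theorem continuousWithinAt_Ici_of_convexOn {f : ℝ → ℝ} {a : ℝ} (hf : ConvexOn ℝ (Set.Ici a) f)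
    (hlsc : LowerSemicontinuousWithinAt f (Set.Ici a) a) :
    ContinuousWithinAt f (Set.Ici a) a := by
  refine continuousWithinAt_iff_lower_upperSemicontinuousWithinAt.2 ⟨hlsc, fun b hb => ?_⟩
  have hchord : ContinuousAt (fun t => f a + (t - a) * (f (a + 1) - f a)) a := by fun_prop
  have hlt : ∀ᶠ t in 𝓝 a, f a + (t - a) * (f (a + 1) - f a) < b :=
    hchord.eventually_lt_const (by simpa using hb)
  filter_upwards [mem_nhdsWithin_of_mem_nhds hlt, self_mem_nhdsWithin,
    mem_nhdsWithin_of_mem_nhds (Iio_mem_nhds (lt_add_one a))] with t ht hat hta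
  have hle := apply_add_smul_le_of_convexOn hf (v := 1) Set.self_mem_Ici
    (Set.mem_Ici.2 (le_add_of_nonneg_right zero_le_one)) (sub_nonneg.2 hat)
    (sub_le_iff_le_add'.2 (Set.mem_Iio.1 hta).le)
  simp only [smul_eq_mul, mul_one, add_sub_cancel] at hle
  exact hle.trans_lt ht

theorem continuousOn_of_isMinOn_of_unique {A B : Type*} [TopologicalSpace A] [TopologicalSpace B]
    {s : Set A} {t : Set B} {f : A → B → ℝ} {g : A → B}
    (hf : ContinuousOn (Function.uncurry f) (s ×ˢ t))
    (hmin : ∀ a ∈ s, IsMinOn (f a) t (g a))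
    (huniq : ∀ a ∈ s, ∀ b ∈ t, IsMinOn (f a) t b → b = g a)
    (hcpt : ∀ a ∈ s, ∃ K ⊆ t, IsCompact K ∧ ∀ᶠ a' in 𝓝[s] a, g a' ∈ K) :
    ContinuousOn g s := by
  intro a ha
  obtain ⟨K, hKt, hK, hgK⟩ := hcpt a ha
  refine tendsto_iff_ultrafilter _ _ _ |>.2 fun U hU => ?_
  have hUs : ∀ᶠ a' in (U : Filter A), a' ∈ s := hU self_mem_nhdsWithin
  have hUK : ∀ᶠ a' in (U : Filter A), g a' ∈ K := hU hgK
  have hUa : Tendsto id (U : Filter A) (𝓝 a) := hU.trans nhdsWithin_le_nhds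
  obtain ⟨b, hbK, hb⟩ := hK.ultrafilter_le_nhds' (U.map g) hUK
  have hgb : Tendsto g U (𝓝 b) := hb
  have hlim {v : A → B} {b' : B} (hb' : b' ∈ t) (hv : Tendsto v U (𝓝 b'))
      (hvt : ∀ᶠ a' in (U : Filter A), v a' ∈ t) :
      Tendsto (fun a' => f a' (v a')) U (𝓝 (f a b')) :=
    (hf (a, b') ⟨ha, hb'⟩).tendsto.comp <| tendsto_nhdsWithin_iff.2
      ⟨hUa.prodMk_nhds hv, hUs.and hvt⟩
  have hbmin : IsMinOn (f a) t b := fun b' hb' =>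
    le_of_tendsto_of_tendsto (hlim (hKt hbK) hgb (hUK.mono fun _ h => hKt h))
      (hlim hb' tendsto_const_nhds (.of_forall fun _ => hb'))
      (hUs.mono fun a' ha' => hmin a' ha' hb')
  exact huniq a ha b (hKt hbK) hbmin ▸ hgb

theorem exists_isMinOn_tendsto_of_descent {E : Type*} [TopologicalSpace E] {s : Set E}
    {F Φ : E → ℝ} {u : ℕ → E} (hF : ContinuousOn F s) (hΦ : ContinuousOn Φ s)
    (hcpt : ∀ M, IsCompact {p ∈ s | F p ≤ M})
    (huniq : ∀ p ∈ s, ∀ q ∈ s, IsMinOn F s p → IsMinOn F s q → p = q)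
    (hstat : ∀ p ∈ s, F p ≤ Φ p → IsMinOn F s p)
    (hu : ∀ k, u k ∈ s) (hanti : Antitone fun k => F (u k))
    (hfreq : ∃ᶠ k in atTop, F (u (k + 1)) ≤ Φ (u k)) :
    ∃ p ∈ s, IsMinOn F s p ∧ Tendsto u atTop (𝓝 p) := by
  have huK (k : ℕ) : u k ∈ {p ∈ s | F p ≤ F (u 0)} := ⟨hu k, hanti k.zero_le⟩
  have hbdd : BddBelow (Set.range fun k => F (u k)) :=
    ((hcpt (F (u 0))).bddBelow_image (hF.mono fun _ h => h.1)).mono <|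
      Set.range_subset_iff.2 fun k => Set.mem_image_of_mem F (huK k)
  obtain ⟨L, hL⟩ : ∃ L, Tendsto (fun k => F (u k)) atTop (𝓝 L) :=
    ⟨_, tendsto_atTop_ciInf hanti hbdd⟩
  have hcomp {G : E → ℝ} (hG : ContinuousOn G s) {U : Ultrafilter ℕ} {p : E} (hp : p ∈ s)
      (hup : Tendsto u U (𝓝 p)) : Tendsto (fun k => G (u k)) U (𝓝 (G p)) :=
    (hG p hp).tendsto.comp (tendsto_nhdsWithin_iff.2 ⟨hup, .of_forall hu⟩)
  have hcluster (U : Ultrafilter ℕ) (hU : (U : Filter ℕ) ≤ atTop) :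
      ∃ p ∈ s, Tendsto u U (𝓝 p) ∧ F p = L := by
    obtain ⟨p, hp, hup⟩ :=
      (hcpt (F (u 0))).ultrafilter_le_nhds' (U.map u) (mem_map.2 (univ_mem' huK))
    exact ⟨p, hp.1, hup, tendsto_nhds_unique (hcomp hF hp.1 hup) (hL.mono_left hU)⟩
  have : (atTop ⊓ 𝓟 {k | F (u (k + 1)) ≤ Φ (u k)}).NeBot := frequently_mem_iff_neBot.1 hfreq
  set U := Ultrafilter.of (atTop ⊓ 𝓟 {k | F (u (k + 1)) ≤ Φ (u k)})
  have hUle := Ultrafilter.of_le (atTop ⊓ 𝓟 {k | F (u (k + 1)) ≤ Φ (u k)})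
  obtain ⟨p, hp, hup, hFp⟩ := hcluster U (hUle.trans inf_le_left)
  have hLΦ : L ≤ Φ p :=
    le_of_tendsto_of_tendsto ((hL.comp (tendsto_add_atTop_nat 1)).mono_left
      (hUle.trans inf_le_left)) (hcomp hΦ hp hup) (hUle.trans inf_le_right (mem_principal_self _))
  have hpmin : IsMinOn F s p := hstat p hp (hFp.trans_le hLΦ)
  refine ⟨p, hp, hpmin, tendsto_iff_ultrafilter _ _ _ |>.2 fun V hV => ?_⟩
  obtain ⟨q, hq, huq, hFq⟩ := hcluster V hV
  have hqmin : IsMinOn F s q := fun r hr => (hFq.trans hFp.symm).trans_le (hpmin hr)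
  exact huniq p hp q hq hpmin hqmin ▸ huq

theorem isMinOn_of_convexOn_of_hasFDerivAt_zero {E : Type*} [NormedAddCommGroup E]
    [NormedSpace ℝ E] {s : Set E} {F : E → ℝ} {p : E} (hF : ConvexOn ℝ s F) (hp : p ∈ s)
    (hFp : HasFDerivAt F (0 : E →L[ℝ] ℝ) p) : IsMinOn F s p := by
  intro q hq
  have hline : ConvexOn ℝ (AffineMap.lineMap p q ⁻¹' s) (F ∘ AffineMap.lineMap (k := ℝ) p q) :=
    hF.comp_affineMap _
  have hderiv : HasDerivAt (F ∘ AffineMap.lineMap (k := ℝ) p q) 0 0 := by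
    have hFp' : HasFDerivAt F (0 : E →L[ℝ] ℝ) (AffineMap.lineMap p q (0 : ℝ)) := by
      rwa [AffineMap.lineMap_apply_zero]
    simpa using hFp'.comp_hasDerivAt 0 AffineMap.hasDerivAt_lineMap
  have hslope := hline.le_slope_of_hasDerivAt (by simpa using hp) (by simpa using hq)
    one_pos hderiv
  simpa [slope_def_field] using hslope

theorem hasFDerivAt_zero_of_isLocalMin_update {ι : Type*} [Finite ι] [DecidableEq ι]
    {V : ι → Type*} [∀ i, NormedAddCommGroup (V i)] [∀ i, NormedSpace ℝ (V i)]
    {F : (∀ i, V i) → ℝ} {p : ∀ i, V i} (hF : DifferentiableAt ℝ F p)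
    (hmin : ∀ i, IsLocalMin (fun v => F (Function.update p i v)) (p i)) :
    HasFDerivAt F (0 : (∀ i, V i) →L[ℝ] ℝ) p := by
  cases nonempty_fintype ι
  have hzero : fderiv ℝ F p = 0 := by
    refine ContinuousLinearMap.coe_injective (LinearMap.pi_ext fun i v => ?_)
    have hblock : HasFDerivAt (fun w => F (Function.update p i w))
        ((fderiv ℝ F p).comp (.pi (Pi.single i (.id ℝ (V i))))) (p i) := by
      refine HasFDerivAt.comp (p i) ?_ (hasFDerivAt_update p (p i))
      simpa using hF.hasFDerivAt
    have hsingle : ContinuousLinearMap.pi (Pi.single i (.id ℝ (V i))) v = Pi.single i v := by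
      ext j
      obtain rfl | hj := eq_or_ne j i <;> simp [*]
    simpa [hsingle] using DFunLike.congr_fun ((hmin i).hasFDerivAt_eq_zero hblock) v
  exact hzero ▸ hF.hasFDerivAt

theorem antitone_and_frequently_of_alternating {E β : Type*} [Preorder β] {s : Set E} {F : E → β}
    {f g : E → E} {u : ℕ → E} (hf : Set.MapsTo f s s) (hg : Set.MapsTo g s s)
    (hFf : ∀ p ∈ s, F (f p) ≤ F p) (hFg : ∀ p ∈ s, F (g p) ≤ F p) (h0 : u 0 ∈ s)
    (hsucc : ∀ k, u (k + 1) = if (k + 1) % 2 = 1 then f (u k) else g (u k)) :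
    (∀ k, u k ∈ s) ∧ (Antitone fun k => F (u k)) ∧ ∃ᶠ k in atTop, u (k + 1) = f (u k) := by
  have hu (k : ℕ) : u k ∈ s := by
    induction k with
    | zero => exact h0
    | succ k ih => rw [hsucc]; split_ifs; exacts [hf ih, hg ih]
  refine ⟨hu, antitone_nat_of_succ_le fun k => ?_, ?_⟩
  · rw [hsucc]
    split_ifs
    exacts [hFf _ (hu k), hFg _ (hu k)]
  · refine Nat.frequently_even.mono fun k hk => ?_
    rw [hsucc, if_pos (Nat.odd_iff.1 hk.add_one)]

theorem convexOn_finsetSum {ι E : Type*} [AddCommGroup E] [Module ℝ E] {s : Set E}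
    (hs : Convex ℝ s) {t : Finset ι} {f : ι → E → ℝ} (hf : ∀ i ∈ t, ConvexOn ℝ s (f i)) :
    ConvexOn ℝ s fun p => ∑ i ∈ t, f i p := by
  refine ⟨hs, fun p hp q hq a b ha hb hab => ?_⟩
  calc ∑ i ∈ t, f i (a • p + b • q) ≤ ∑ i ∈ t, (a • f i p + b • f i q) :=
        Finset.sum_le_sum fun i hi => (hf i hi).2 hp hq ha hb hab
    _ = a • ∑ i ∈ t, f i p + b • ∑ i ∈ t, f i q := by
        simp only [Finset.sum_add_distrib, Finset.smul_sum]

theorem convexOn_mul_comp_div {E : Type*} [AddCommGroup E] [Module ℝ E] {s : Set E}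
    (hs : Convex ℝ s) {f : ℝ → ℝ} (hf : ConvexOn ℝ (Set.Ici 0) f) {v w : ℝ} (hv : 0 ≤ v)
    (hw : 0 ≤ w) {g : E → ℝ}
    (hg : ∀ p q : E, ∀ a b : ℝ, a + b = 1 → g (a • p + b • q) = a * g p + b * g q)
    (hg0 : ∀ p ∈ s, 0 ≤ g p) : ConvexOn ℝ s fun p => v * f (g p / w) := by
  refine ⟨hs, fun p hp q hq a b ha hb hab => ?_⟩
  have hle := hf.2 (div_nonneg (hg0 p hp) hw) (div_nonneg (hg0 q hq) hw) ha hb hab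
  calc v * f (g (a • p + b • q) / w)
      = v * f (a • (g p / w) + b • (g q / w)) := by
        rw [hg p q a b hab]; simp only [smul_eq_mul]; ring_nf
    _ ≤ v * (a • f (g p / w) + b • f (g q / w)) := by gcongr
    _ = a • (v * f (g p / w)) + b • (v * f (g q / w)) := by simp only [smul_eq_mul]; ring

theorem strictConvexOn_sum_apply {X Y : Type*} [Fintype X] [Fintype Y] {f : X → Y → ℝ → ℝ}
    {s : Set ℝ} (hf : ∀ x y, StrictConvexOn ℝ s (f x y)) (hs : Convex ℝ s) :
    StrictConvexOn ℝ {p : X → Y → ℝ | ∀ x y, p x y ∈ s} fun p => ∑ x, ∑ y, f x y (p x y) := by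
  refine ⟨fun p hp q hq a b ha hb hab x y => hs (hp x y) (hq x y) ha hb hab,
    fun p hp q hq hpq a b ha hb hab => ?_⟩
  obtain ⟨x₀, hx₀⟩ := Function.ne_iff.1 hpq
  obtain ⟨y₀, hxy₀⟩ := Function.ne_iff.1 hx₀
  have hle (x y) := (hf x y).convexOn.2 (hp x y) (hq x y) ha.le hb.le hab
  calc ∑ x, ∑ y, f x y ((a • p + b • q) x y)
      < ∑ x, ∑ y, (a • f x y (p x y) + b • f x y (q x y)) :=
        Finset.sum_lt_sum (fun x _ => Finset.sum_le_sum fun y _ => hle x y)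
          ⟨x₀, Finset.mem_univ _, Finset.sum_lt_sum (fun y _ => hle x₀ y)
            ⟨y₀, Finset.mem_univ _, (hf x₀ y₀).2 (hp x₀ y₀) (hq x₀ y₀) hxy₀ ha hb hab⟩⟩
    _ = a • ∑ x, ∑ y, f x y (p x y) + b • ∑ x, ∑ y, f x y (q x y) := by
        simp only [Finset.sum_add_distrib, Finset.smul_sum]

theorem sum_sub_sum_eq_sum_subtype {ι M : Type*} [Fintype ι] [AddCommGroup M] (J : Set ι)
    {f g : ι → M} (h : ∀ i ∉ J, f i = g i) :
    ∑ i, f i - ∑ i, g i = ∑ j : J, f j - ∑ j : J, g j := by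
  rw [← Fintype.sum_subtype_add_sum_subtype (· ∈ J) f,
    ← Fintype.sum_subtype_add_sum_subtype (· ∈ J) g,
    Fintype.sum_congr (fun i : {i // i ∉ J} => f i) (fun i => g i) fun i => h i i.2]
  exact add_sub_add_right_eq_sub _ _ _

theorem ereal_coe_sum {ι : Type*} (s : Finset ι) (f : ι → ℝ) :
    ((∑ i ∈ s, f i : ℝ) : EReal) = ∑ i ∈ s, (f i : EReal) :=
  map_sum (⟨⟨Real.toEReal, EReal.coe_zero⟩, EReal.coe_add⟩ : ℝ →+ EReal) f s

section KullbackLeibler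

open InformationTheory

theorem mul_sub_exp_sub_one_le_klFun {x : ℝ} (hx : 0 ≤ x) (s : ℝ) :
    s * x - (Real.exp s - 1) ≤ klFun x := by
  obtain rfl | hx := hx.eq_or_lt
  · simp [klFun_zero, (Real.exp_pos s).le]
  · have hpos := Real.exp_pos s
    have hkl : 0 ≤ Real.exp s * klFun (x / Real.exp s) :=
      mul_nonneg hpos.le (klFun_nonneg (by positivity))
    rw [klFun_apply, Real.log_div hx.ne' hpos.ne', Real.log_exp] at hkl
    rw [klFun_apply]
    have : Real.exp s * (x / Real.exp s * (Real.log x - s) + 1 - x / Real.exp s)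
        = x * (Real.log x - s) + Real.exp s - x := by field_simp
    linarith

theorem strictConvexOn_mul_klFun_div {v w : ℝ} (hv : 0 < v) (hw : 0 < w) :
    StrictConvexOn ℝ (Set.Ici 0) fun x => v * klFun (x / w) := by
  refine ⟨convex_Ici 0, fun x hx y hy hxy a b ha hb hab => ?_⟩
  have hlt := strictConvexOn_klFun.2 (div_nonneg hx hw.le) (div_nonneg hy hw.le)
    (fun h => hxy ((div_left_inj' hw.ne').1 h)) ha hb hab
  calc v * klFun ((a • x + b • y) / w)
      = v * klFun (a • (x / w) + b • (y / w)) := by simp only [smul_eq_mul]; ring_nf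
    _ < v * (a • klFun (x / w) + b • klFun (y / w)) := by gcongr
    _ = a • (v * klFun (x / w)) + b • (v * klFun (y / w)) := by simp only [smul_eq_mul]; ring

theorem KLfin_eq_coe_sum_klFun {Z : Type*} [Fintype Z] (ρ : Z → ℝ) {σ : Z → ℝ}
    (hσ : ∀ z, σ z ≠ 0) :
    KLfin ρ σ = ((∑ z, σ z * klFun (ρ z / σ z) : ℝ) : EReal) := by
  rw [KLfin, if_pos fun z hz => absurd hz (hσ z)]
  congr 2 with z
  rw [klFun_apply]
  have := hσ z
  field_simp
  ring

end KullbackLeibler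

/-- The consequences of `AssumptionA` for the real-valued restriction of an entropy function to
`[0, ∞)`; continuity includes the endpoint `0`. -/
structure RegularEntropy (f : ℝ → ℝ) : Prop where
  convexOn : ConvexOn ℝ (Set.Ici 0) f
  continuousOn : ContinuousOn f (Set.Ici 0)
  nonneg : ∀ x, 0 ≤ x → 0 ≤ f x
  differentiableAt : ∀ x, 0 < x → DifferentiableAt ℝ f x

namespace AssumptionA

variable {φ : ℝ → EReal}

theorem coe_toReal (h : AssumptionA φ) {x : ℝ} (hx : 0 ≤ x) : ((φ x).toReal : EReal) = φ x :=
  EReal.coe_toReal (h.2.2.1 x hx) (h.1.2.2.1 x)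

theorem convexOn_toReal (h : AssumptionA φ) : ConvexOn ℝ (Set.Ici 0) fun s => (φ s).toReal := by
  refine ⟨convex_Ici 0, fun x hx y hy a b ha hb hab => ?_⟩
  have hle := h.1.2.1 x y a b ha hb hab
  rw [← h.coe_toReal hx, ← h.coe_toReal hy,
    ← h.coe_toReal (x := a * x + b * y) (convex_Ici 0 hx hy ha hb hab)] at hle
  exact_mod_cast hle

theorem lowerSemicontinuousWithinAt_toReal (h : AssumptionA φ) {x : ℝ} (hx : 0 ≤ x) :
    LowerSemicontinuousWithinAt (fun s => (φ s).toReal) (Set.Ici 0) x := by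
  intro b hb
  have hbx : (b : EReal) < φ x := by
    rw [← h.coe_toReal hx]
    exact_mod_cast hb
  filter_upwards [mem_nhdsWithin_of_mem_nhds (h.1.1 x b hbx), self_mem_nhdsWithin] with t ht ht0
  rw [← h.coe_toReal ht0] at ht
  exact_mod_cast ht

theorem regularEntropy_toReal (h : AssumptionA φ) : RegularEntropy fun s => (φ s).toReal := by
  have hdiff (x : ℝ) (hx : 0 < x) : DifferentiableAt ℝ (fun s => (φ s).toReal) x :=
    (h.2.2.2.differentiableOn one_ne_zero).differentiableAt (Ioi_mem_nhds hx)
  refine ⟨h.convexOn_toReal, fun x hx => ?_, fun x _ => EReal.toReal_nonneg (h.2.1 x), hdiff⟩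
  obtain rfl | hx := (Set.mem_Ici.1 hx).eq_or_lt
  · exact continuousWithinAt_Ici_of_convexOn h.convexOn_toReal
      (h.lowerSemicontinuousWithinAt_toReal le_rfl)
  · exact (hdiff x hx).continuousAt.continuousWithinAt

theorem divergence_eq_coe {Z : Type*} [Fintype Z] (h : AssumptionA φ) {ρ σ : Z → ℝ}
    (hρ : ∀ z, 0 ≤ ρ z) (hσ : ∀ z, 0 < σ z) :
    divergence φ ρ σ = ((∑ z, σ z * (φ (ρ z / σ z)).toReal : ℝ) : EReal) := by
  simp only [divergence, hσ, if_true, (hσ _).ne', if_false, Finset.sum_const_zero, EReal.coe_zero,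
    mul_zero, add_zero, ereal_coe_sum, EReal.coe_mul,
    h.coe_toReal (div_nonneg (hρ _) (hσ _).le)]

end AssumptionA

section Plans

variable {X Y : Type*}

section OutMarg

variable [Fintype X] (J : Set X) {π p q : X → Y → ℝ}

theorem outMarg_nonneg (hπ : 0 ≤ π) : 0 ≤ outMarg J π := fun y =>
  Finset.sum_nonneg fun x _ => Set.indicator_nonneg (fun x' _ => hπ x' y) x

theorem continuous_outMarg : Continuous (outMarg (Y := Y) J) := by
  refine continuous_pi fun y => continuous_finsetSum _ fun x _ => ?_
  by_cases hx : x ∈ Jᶜ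
  · simpa only [Set.indicator_of_mem hx] using continuous_apply_apply x y
  · simpa only [Set.indicator_of_notMem hx] using continuous_const

variable {J} in
theorem outMarg_congr (h : ∀ x ∉ J, p x = q x) : outMarg J p = outMarg J q :=
  funext fun y => Finset.sum_congr rfl fun x _ =>
    congrFun (Set.indicator_congr fun x' hx' => congrFun (h x' hx') y) x

theorem sum_restrict_add_outMarg (π : X → Y → ℝ) (y : Y) :
    ∑ j : J, π j y + outMarg J π y = ∑ x, π x y := by
  have houter : outMarg J π y = ∑ x : {x // x ∉ J}, π x y := by
    rw [outMarg, ← Fintype.sum_subtype_add_sum_subtype (· ∈ J)]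
    simp [Set.indicator]
  rw [houter]
  exact Fintype.sum_subtype_add_sum_subtype (· ∈ J) fun x => π x y

end OutMarg

theorem domRestrict_cellRestr (J : Set X) (π : X → Y → ℝ) :
    J.domRestrict (cellRestr J π) = J.domRestrict π := by
  ext j y
  exact Set.indicator_of_mem j.2 fun x => π x y

theorem cellRestr_nonneg (J : Set X) {π : X → Y → ℝ} (hπ : 0 ≤ π) : 0 ≤ cellRestr J π :=
  fun x y => Set.indicator_nonneg (fun x' _ => hπ x' y) x

theorem continuous_cellRestr (J : Set X) : Continuous (cellRestr (Y := Y) J) := by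
  refine continuous_pi fun x => continuous_pi fun y => ?_
  by_cases hx : x ∈ J
  · simpa only [cellRestr, Set.indicator_of_mem hx] using continuous_apply_apply x y
  · simpa only [cellRestr, Set.indicator_of_notMem hx] using continuous_const

variable {n : ℕ} {Js : Fin n → Set X} {S : Fin n → (X → Y → ℝ) → X → Y → ℝ}
  {Θ Θ₀ : (Fin n → X → Y → ℝ) → (Fin n → X → Y → ℝ) → Fin n → ℝ} {π : X → Y → ℝ}

theorem parUpdate_nonneg (hΘ : ∀ πJ tπ i, Θ πJ tπ i ∈ Set.Icc (0 : ℝ) 1) (hπ : 0 ≤ π)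
    (hS : ∀ i, 0 ≤ S i π) : 0 ≤ parUpdate Js S Θ π := by
  intro x y
  simp only [parUpdate, combPlan, Pi.zero_apply]
  exact Finset.sum_nonneg fun i _ => add_nonneg
    (mul_nonneg (sub_nonneg.2 (hΘ _ _ i).2) (cellRestr_nonneg (Js i) hπ x y))
    (mul_nonneg (hΘ _ _ i).1 (hS i x y))

theorem continuousOn_parUpdate {s : Set (X → Y → ℝ)} (hΘ : Continuous (Function.uncurry Θ))
    (hS : ∀ i, ContinuousOn (S i) s) : ContinuousOn (parUpdate Js S Θ) s := by
  have hcells : ContinuousOn (fun π i => cellRestr (Js i) π) s :=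
    (continuous_pi fun i => continuous_cellRestr (Js i)).continuousOn
  have hsolve : ContinuousOn (fun π i => S i π) s := continuousOn_pi.2 hS
  have hweights := hΘ.comp_continuousOn (hcells.prodMk hsolve)
  have hcontinuous {u : (X → Y → ℝ) → Fin n → X → Y → ℝ} (hu : ContinuousOn u s) (i x y) :
      ContinuousOn (fun π => u π i x y) s :=
    continuousOn_pi.1 (continuousOn_pi.1 (continuousOn_pi.1 hu i) x) y
  refine continuousOn_pi.2 fun x => continuousOn_pi.2 fun y => ?_
  simp only [parUpdate, combPlan]
  refine continuousOn_finsetSum _ fun i _ => ?_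
  have hweight := continuousOn_pi.1 hweights i
  exact ((continuousOn_const.sub hweight).mul (hcontinuous hcells i x y)).add
    (hweight.mul (hcontinuous hsolve i x y))

theorem sum_cellRestr (hJs : IsFinPartition Js) (π : X → Y → ℝ) (x : X) (y : Y) :
    ∑ i, cellRestr (Js i) π x y = π x y := by
  obtain ⟨i, hi⟩ := Set.iUnion_eq_univ_iff.1 hJs.2.1 x
  rw [Fintype.sum_eq_single i fun j hj => ?_]
  · exact Set.indicator_of_mem hi _
  · exact Set.indicator_of_notMem (Set.disjoint_left.1 (hJs.2.2 i j hj.symm) hi) _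

theorem parUpdate_eq_self (hJs : IsFinPartition Js) (h : ∀ i, S i π = cellRestr (Js i) π) :
    parUpdate Js S Θ π = π := by
  ext x y
  simp only [parUpdate, combPlan, h, ← add_mul, sub_add_cancel, one_mul, sum_cellRestr hJs]

theorem apply_parUpdate_le {β : Type*} [Preorder β] {F : (X → Y → ℝ) → β}
    (hJs : IsFinPartition Js)
    (hdec : (∃ i, S i π ≠ cellRestr (Js i) π) → F (parUpdate Js S Θ₀ π) < F π)
    (hcomp : F (parUpdate Js S Θ π) ≤ F (parUpdate Js S Θ₀ π)) :
    F (parUpdate Js S Θ π) ≤ F π := by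
  by_cases hfix : ∃ i, S i π ≠ cellRestr (Js i) π
  · exact hcomp.trans (hdec hfix).le
  · rw [parUpdate_eq_self hJs (not_exists_not.1 hfix)]

end Plans

/-- The data of an entropic unbalanced transport problem with real-valued entropies. It serves both
for the global problem on `X × Y` and for its cell subproblems on `X_J × Y`. -/
structure UnbalancedProblem (X Y : Type*) where
  cost : X → Y → ℝ
  ε : ℝ
  f₁ : ℝ → ℝ
  f₂ : ℝ → ℝ
  μ : X → ℝ
  ν : Y → ℝ
  ε_pos : 0 < ε
  entropy₁ : RegularEntropy f₁
  entropy₂ : RegularEntropy f₂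
  μ_pos : ∀ x, 0 < μ x
  ν_pos : ∀ y, 0 < ν y

namespace UnbalancedProblem

open InformationTheory

variable {X Y : Type*}

/-- The problem whose entropies are the real-valued restrictions of `φ₁` and `φ₂` to `[0, ∞)`. -/
@[simps]
def ofAssumptionA (c : X → Y → ℝ) {ε : ℝ} (hε : 0 < ε) {φ₁ φ₂ : ℝ → EReal} (h₁ : AssumptionA φ₁)
    (h₂ : AssumptionA φ₂) {μ : X → ℝ} {ν : Y → ℝ} (hμ : ∀ x, 0 < μ x) (hν : ∀ y, 0 < ν y) :
    UnbalancedProblem X Y where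
  cost := c
  ε := ε
  f₁ s := (φ₁ s).toReal
  f₂ s := (φ₂ s).toReal
  μ := μ
  ν := ν
  ε_pos := hε
  entropy₁ := h₁.regularEntropy_toReal
  entropy₂ := h₂.regularEntropy_toReal
  μ_pos := hμ
  ν_pos := hν

/-- The subproblem on the cell `J × Y`. -/
@[simps]
def restrict (P : UnbalancedProblem X Y) (J : Set X) : UnbalancedProblem J Y where
  cost j y := P.cost j y
  ε := P.ε
  f₁ := P.f₁
  f₂ := P.f₂
  μ j := P.μ j
  ν := P.ν
  ε_pos := P.ε_pos
  entropy₁ := P.entropy₁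
  entropy₂ := P.entropy₂
  μ_pos j := P.μ_pos j
  ν_pos := P.ν_pos

variable (P : UnbalancedProblem X Y)

theorem μ_mul_ν_pos (x : X) (y : Y) : 0 < P.μ x * P.ν y := mul_pos (P.μ_pos x) (P.ν_pos y)

variable [Fintype X] [Fintype Y]

/-- The objective without its `KL` term, for the `Y`-submarginal `νm`. -/
def marginalCost (νm : Y → ℝ) (π : X → Y → ℝ) : ℝ :=
  ∑ x, ∑ y, P.cost x y * π x y + ∑ x, P.μ x * P.f₁ ((∑ y, π x y) / P.μ x)
    + ∑ y, P.ν y * P.f₂ ((∑ x, π x y + νm y) / P.ν y)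

/-- The entropic term `ε KL(π | μ ⊗ ν)`, written with `klFun` since `μ ⊗ ν` is positive. -/
def klCost (π : X → Y → ℝ) : ℝ :=
  ∑ x, ∑ y, P.ε * (P.μ x * P.ν y) * klFun (π x y / (P.μ x * P.ν y))

/-- The real-valued objective, which agrees with `EJfun` on nonnegative plans. -/
def objective (νm : Y → ℝ) (π : X → Y → ℝ) : ℝ :=
  P.marginalCost νm π + P.klCost π

theorem EJfun_eq_coe_objective (c : X → Y → ℝ) {ε : ℝ} (hε : 0 < ε) {φ₁ φ₂ : ℝ → EReal}
    (h₁ : AssumptionA φ₁) (h₂ : AssumptionA φ₂) {μ : X → ℝ} {ν : Y → ℝ} (hμ : ∀ x, 0 < μ x)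
    (hν : ∀ y, 0 < ν y) {νm : Y → ℝ} (hνm : 0 ≤ νm) {π : X → Y → ℝ} (hπ : 0 ≤ π) :
    EJfun c ε φ₁ φ₂ μ ν νm π = ((ofAssumptionA c hε h₁ h₂ hμ hν).objective νm π : EReal) := by
  rw [EJfun, h₁.divergence_eq_coe (fun x => Finset.sum_nonneg fun y _ => hπ x y) hμ,
    h₂.divergence_eq_coe (fun y => add_nonneg (Finset.sum_nonneg fun x _ => hπ x y) (hνm y)) hν,
    KLfin_eq_coe_sum_klFun (σ := fun p : X × Y => μ p.1 * ν p.2) _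
      fun p => (mul_pos (hμ p.1) (hν p.2)).ne',
    ← EReal.coe_mul, ← EReal.coe_add, ← EReal.coe_add, ← EReal.coe_add, EReal.coe_eq_coe_iff,
    Fintype.sum_prod_type]
  simp only [objective, marginalCost, klCost, ofAssumptionA_cost, ofAssumptionA_ε, ofAssumptionA_f₁,
    ofAssumptionA_f₂, ofAssumptionA_μ, ofAssumptionA_ν, Finset.mul_sum, mul_assoc]
  ring

theorem Eglobal_eq_coe_objective (c : X → Y → ℝ) {ε : ℝ} (hε : 0 < ε) {φ₁ φ₂ : ℝ → EReal}
    (h₁ : AssumptionA φ₁) (h₂ : AssumptionA φ₂) {μ : X → ℝ} {ν : Y → ℝ} (hμ : ∀ x, 0 < μ x)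
    (hν : ∀ y, 0 < ν y) {π : X → Y → ℝ} (hπ : 0 ≤ π) :
    Eglobal c ε φ₁ φ₂ μ ν π = ((ofAssumptionA c hε h₁ h₂ hμ hν).objective 0 π : EReal) :=
  EJfun_eq_coe_objective c hε h₁ h₂ hμ hν le_rfl hπ

section Regularity

variable {νm : Y → ℝ} {π : X → Y → ℝ}

theorem convexOn_marginalCost (hνm : 0 ≤ νm) :
    ConvexOn ℝ (Set.Ici 0) (P.marginalCost νm) := by
  have hs : Convex ℝ (Set.Ici (0 : X → Y → ℝ)) := convex_Ici 0
  refine .add (.add ⟨hs, fun p _ q _ a b _ _ _ => le_of_eq ?_⟩ ?_) ?_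
  · simp only [Pi.add_apply, Pi.smul_apply, smul_eq_mul, mul_add, Finset.sum_add_distrib,
      Finset.mul_sum, mul_left_comm]
  · refine convexOn_finsetSum hs fun x _ => convexOn_mul_comp_div hs P.entropy₁.convexOn
      (P.μ_pos x).le (P.μ_pos x).le
      (fun p q a b _ => ?_) fun p hp => Finset.sum_nonneg fun y _ => hp x y
    simp only [Pi.add_apply, Pi.smul_apply, smul_eq_mul, Finset.sum_add_distrib, Finset.mul_sum]
  · refine convexOn_finsetSum hs fun y _ => convexOn_mul_comp_div hs P.entropy₂.convexOn
      (P.ν_pos y).le (P.ν_pos y).le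
      (fun p q a b hab => ?_) fun p hp =>
        add_nonneg (Finset.sum_nonneg fun x _ => hp x y) (hνm y)
    simp only [Pi.add_apply, Pi.smul_apply, smul_eq_mul, Finset.sum_add_distrib, ← Finset.mul_sum]
    linear_combination -νm y * hab

theorem strictConvexOn_klCost : StrictConvexOn ℝ (Set.Ici 0) P.klCost :=
  strictConvexOn_sum_apply (fun x y => strictConvexOn_mul_klFun_div
    (mul_pos P.ε_pos (P.μ_mul_ν_pos x y)) (P.μ_mul_ν_pos x y)) (convex_Ici 0)

theorem strictConvexOn_objective (hνm : 0 ≤ νm) :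
    StrictConvexOn ℝ (Set.Ici 0) (P.objective νm) :=
  (P.convexOn_marginalCost hνm).add_strictConvexOn P.strictConvexOn_klCost

theorem continuousOn_uncurry_objective :
    ContinuousOn (Function.uncurry P.objective) (Set.Ici 0 ×ˢ Set.Ici 0) := by
  refine .add (.add (.add ?_ ?_) ?_) ?_
  · exact Continuous.continuousOn (by fun_prop)
  · refine continuousOn_finsetSum _ fun x _ => continuousOn_const.mul <|
      P.entropy₁.continuousOn.comp (Continuous.continuousOn (by fun_prop)) fun p hp => ?_
    exact div_nonneg (Finset.sum_nonneg fun y _ => hp.2 x y) (P.μ_pos x).le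
  · refine continuousOn_finsetSum _ fun y _ => continuousOn_const.mul <|
      P.entropy₂.continuousOn.comp (Continuous.continuousOn (by fun_prop)) fun p hp => ?_
    exact div_nonneg (add_nonneg (Finset.sum_nonneg fun x _ => hp.2 x y) (hp.1 y)) (P.ν_pos y).le
  · unfold klCost
    exact Continuous.continuousOn (by fun_prop)

theorem continuousOn_objective (hνm : 0 ≤ νm) :
    ContinuousOn (P.objective νm) (Set.Ici 0) :=
  P.continuousOn_uncurry_objective.comp (f := fun π => (νm, π)) (by fun_prop)
    fun _ hπ => ⟨hνm, hπ⟩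

theorem differentiableAt_objective [Nonempty X] [Nonempty Y] (hνm : 0 ≤ νm)
    (hπ : ∀ x y, 0 < π x y) : DifferentiableAt ℝ (P.objective νm) π := by
  refine .add (.add (.add ?_ ?_) ?_) ?_
  · fun_prop
  · refine .fun_sum fun x _ => .const_mul (.comp (g := P.f₁) π ?_ ?_) _
    · exact P.entropy₁.differentiableAt _
        (div_pos (Finset.sum_pos (fun y _ => hπ x y) Finset.univ_nonempty) (P.μ_pos x))
    · fun_prop
  · refine .fun_sum fun y _ => .const_mul (.comp (g := P.f₂) π ?_ ?_) _
    · exact P.entropy₂.differentiableAt _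
        (div_pos (add_pos_of_pos_of_nonneg
          (Finset.sum_pos (fun x _ => hπ x y) Finset.univ_nonempty) (hνm y)) (P.ν_pos y))
    · fun_prop
  · refine .fun_sum fun x _ => .fun_sum fun y _ => .const_mul (.comp (g := klFun) π ?_ ?_) _
    · exact (hasDerivAt_klFun (div_pos (hπ x y) (P.μ_mul_ν_pos x y)).ne').differentiableAt
    · fun_prop

end Regularity

section Coercivity

theorem exists_forall_sum_le_objective_add :
    ∃ C, ∀ νm : Y → ℝ, 0 ≤ νm → ∀ π : X → Y → ℝ, 0 ≤ π →
      ∑ x, ∑ y, π x y ≤ P.objective νm π + C := by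
  let w (x : X) (y : Y) : ℝ := P.μ x * P.ν y
  let s (x : X) (y : Y) : ℝ := (1 - P.cost x y) / P.ε
  refine ⟨∑ x, ∑ y, P.ε * (w x y * (Real.exp (s x y) - 1)), fun νm hνm π hπ => ?_⟩
  have hpoint (x : X) (y : Y) : π x y ≤ P.cost x y * π x y
      + P.ε * w x y * klFun (π x y / w x y) + P.ε * (w x y * (Real.exp (s x y) - 1)) := by
    have hw : 0 < w x y := P.μ_mul_ν_pos x y
    have hε := P.ε_pos
    have hkl := mul_sub_exp_sub_one_le_klFun (div_nonneg (hπ x y) hw.le) (s x y)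
    calc π x y = P.cost x y * π x y + P.ε * (w x y * (s x y * (π x y / w x y))) := by
          simp only [s]; field_simp; ring
      _ = P.cost x y * π x y + P.ε * (w x y * (s x y * (π x y / w x y) - (Real.exp (s x y) - 1)))
          + P.ε * (w x y * (Real.exp (s x y) - 1)) := by ring
      _ ≤ _ := by rw [mul_assoc P.ε (w x y) (klFun _)]; gcongr
  have h₁ : 0 ≤ ∑ x, P.μ x * P.f₁ ((∑ y, π x y) / P.μ x) :=
    Finset.sum_nonneg fun x _ => mul_nonneg (P.μ_pos x).le <| P.entropy₁.nonneg _ <|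
      div_nonneg (Finset.sum_nonneg fun y _ => hπ x y) (P.μ_pos x).le
  have h₂ : 0 ≤ ∑ y, P.ν y * P.f₂ ((∑ x, π x y + νm y) / P.ν y) :=
    Finset.sum_nonneg fun y _ => mul_nonneg (P.ν_pos y).le <| P.entropy₂.nonneg _ <|
      div_nonneg (add_nonneg (Finset.sum_nonneg fun x _ => hπ x y) (hνm y)) (P.ν_pos y).le
  have hsum := Finset.sum_le_sum fun x (_ : x ∈ Finset.univ) =>
    Finset.sum_le_sum fun y (_ : y ∈ Finset.univ) => hpoint x y
  simp only [Finset.sum_add_distrib, ← Finset.mul_sum] at hsum ⊢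
  simp only [objective, marginalCost, klCost]
  linarith

theorem exists_forall_le_of_objective_le (M : ℝ) :
    ∃ b : X → Y → ℝ, ∀ νm : Y → ℝ, 0 ≤ νm → ∀ π : X → Y → ℝ, 0 ≤ π →
      P.objective νm π ≤ M → π ≤ b := by
  obtain ⟨C, hC⟩ := P.exists_forall_sum_le_objective_add
  refine ⟨fun _ _ => M + C, fun νm hνm π hπ hM x y => ?_⟩
  calc π x y ≤ ∑ y, π x y := Finset.single_le_sum (fun y _ => hπ x y) (Finset.mem_univ y)
    _ ≤ ∑ x, ∑ y, π x y := Finset.single_le_sum (f := fun x => ∑ y, π x y)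
        (fun x _ => Finset.sum_nonneg fun y _ => hπ x y) (Finset.mem_univ x)
    _ ≤ P.objective νm π + C := hC νm hνm π hπ
    _ ≤ M + C := by gcongr

theorem isCompact_sublevel_objective {νm : Y → ℝ} (hνm : 0 ≤ νm) (M : ℝ) :
    IsCompact {π ∈ Set.Ici 0 | P.objective νm π ≤ M} := by
  obtain ⟨b, hb⟩ := P.exists_forall_le_of_objective_le M
  refine isCompact_Icc.of_isClosed_subset ?_ fun π hπ => ⟨hπ.1, hb νm hνm π hπ.1 hπ.2⟩
  exact (P.continuousOn_objective hνm).preimage_isClosed_of_isClosed isClosed_Ici isClosed_Iic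

end Coercivity

section Minimizers

variable {νm : Y → ℝ} {π : X → Y → ℝ}

theorem eq_of_isMinOn_objective (hνm : 0 ≤ νm) {π' : X → Y → ℝ} (hπ : 0 ≤ π) (hπ' : 0 ≤ π')
    (h : IsMinOn (P.objective νm) (Set.Ici 0) π) (h' : IsMinOn (P.objective νm) (Set.Ici 0) π') :
    π = π' :=
  (P.strictConvexOn_objective hνm).eq_of_isMinOn h h' hπ hπ'

theorem continuousOn_of_isMinOn_objective {A : Type*} [TopologicalSpace A] {s : Set A}
    {m : A → Y → ℝ} {g : A → X → Y → ℝ} (hm : ContinuousOn m s) (hm0 : ∀ a ∈ s, 0 ≤ m a)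
    (hg0 : ∀ a ∈ s, 0 ≤ g a) (hg : ∀ a ∈ s, IsMinOn (P.objective (m a)) (Set.Ici 0) (g a)) :
    ContinuousOn g s := by
  refine continuousOn_of_isMinOn_of_unique (f := fun a => P.objective (m a)) (t := Set.Ici 0)
    (P.continuousOn_uncurry_objective.comp (f := Prod.map m id)
      (hm.prodMap continuousOn_id) fun p hp => ⟨hm0 p.1 hp.1, hp.2⟩) hg
    (fun a ha b hb hmin => P.eq_of_isMinOn_objective (hm0 a ha) hb (hg0 a ha) hmin (hg a ha))
    fun a ha => ?_
  obtain ⟨b, hb⟩ := P.exists_forall_le_of_objective_le (P.objective (m a) 0 + 1)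
  have hcont : ContinuousOn (fun a' => P.objective (m a') 0) s :=
    P.continuousOn_uncurry_objective.comp (f := fun a' => (m a', 0))
      (hm.prodMk continuousOn_const) fun a' ha' => ⟨hm0 a' ha', Set.self_mem_Ici⟩
  refine ⟨Set.Icc 0 b, fun _ h => h.1, isCompact_Icc, ?_⟩
  filter_upwards [(hcont a ha).eventually_lt_const (lt_add_one _), self_mem_nhdsWithin]
    with a' hlt ha'
  have hle : P.objective (m a') (g a') ≤ P.objective (m a') 0 := hg a' ha' Set.self_mem_Ici
  exact ⟨hg0 a' ha', hb _ (hm0 a' ha') _ (hg0 a' ha') (hle.trans hlt.le)⟩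

theorem klCost_add_smul_single {x : X} {y : Y} (hzero : π x y = 0) (t : ℝ) :
    P.klCost (π + t • (Pi.single x (Pi.single y 1) : X → Y → ℝ))
      = P.klCost π + P.ε * (t * (Real.log (t / (P.μ x * P.ν y)) - 1)) := by
  have hw := (P.μ_mul_ν_pos x y).ne'
  rw [← sub_eq_iff_eq_add', klCost, klCost, ← Finset.sum_sub_distrib,
    Fintype.sum_eq_single x fun x' hx' => ?_, ← Finset.sum_sub_distrib,
    Fintype.sum_eq_single y fun y' hy' => ?_]
  · generalize P.μ x * P.ν y = w at hw ⊢
    simp only [Pi.add_apply, Pi.smul_apply, Pi.single_eq_same, smul_eq_mul, mul_one, hzero,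
      zero_add, zero_div, klFun_apply]
    field_simp
    ring
  · simp [hy']
  · simp [hx']

theorem pos_of_isMinOn_objective (hνm : 0 ≤ νm) (hπ : 0 ≤ π)
    (hmin : IsMinOn (P.objective νm) (Set.Ici 0) π) (x : X) (y : Y) : 0 < π x y := by
  -- Moving mass `t` into an empty entry costs at most `t D + ε t (log (t / w) - 1)`, which is
  -- negative for small `t`.
  by_contra hnot
  have hzero : π x y = 0 := le_antisymm (not_lt.1 hnot) (hπ x y)
  have hε := P.ε_pos
  have hw := P.μ_mul_ν_pos x y
  set w := P.μ x * P.ν y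
  let e : X → Y → ℝ := Pi.single x (Pi.single y 1)
  have he : 0 ≤ e := Pi.single_nonneg.2 (Pi.single_nonneg.2 zero_le_one)
  set D := P.marginalCost νm (π + e) - P.marginalCost νm π
  set t := min 1 (w * Real.exp (-|D| / P.ε))
  have ht : 0 < t := by positivity
  have hmarginal : P.marginalCost νm (π + t • e) ≤ P.marginalCost νm π + t * D :=
    apply_add_smul_le_of_convexOn (P.convexOn_marginalCost hνm) hπ (add_nonneg hπ he) ht.le
      (min_le_left _ _)
  have hlog : P.ε * Real.log (t / w) ≤ -|D| := by
    have hexp : t / w ≤ Real.exp (-|D| / P.ε) := (div_le_iff₀' hw).2 (min_le_right _ _)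
    exact (le_div_iff₀' hε).1 ((Real.log_le_iff_le_exp (by positivity)).2 hexp)
  have hgain : t * (D + P.ε * Real.log (t / w) - P.ε) < 0 :=
    mul_neg_of_pos_of_neg ht (by linarith [le_abs_self D])
  have hle : P.objective νm π ≤ P.objective νm (π + t • e) :=
    hmin (add_nonneg hπ (smul_nonneg ht.le he))
  rw [objective, objective, P.klCost_add_smul_single hzero] at hle
  linarith

end Minimizers

section Cells

variable {J : Set X} {π p q : X → Y → ℝ}

theorem objective_sub_objective_eq_restrict (h : ∀ x ∉ J, q x = p x) :
    P.objective 0 q - P.objective 0 p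
      = (P.restrict J).objective (outMarg J p) (J.domRestrict q)
        - (P.restrict J).objective (outMarg J p) (J.domRestrict p) := by
  have hcost := sum_sub_sum_eq_sum_subtype J (f := fun x => ∑ y, P.cost x y * q x y)
    (g := fun x => ∑ y, P.cost x y * p x y) fun x hx => by simp only [h x hx]
  have hrow := sum_sub_sum_eq_sum_subtype J (f := fun x => P.μ x * P.f₁ ((∑ y, q x y) / P.μ x))
    (g := fun x => P.μ x * P.f₁ ((∑ y, p x y) / P.μ x)) fun x hx => by simp only [h x hx]
  have hkl := sum_sub_sum_eq_sum_subtype J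
    (f := fun x => ∑ y, P.ε * (P.μ x * P.ν y) * klFun (q x y / (P.μ x * P.ν y)))
    (g := fun x => ∑ y, P.ε * (P.μ x * P.ν y) * klFun (p x y / (P.μ x * P.ν y)))
    fun x hx => by simp only [h x hx]
  simp only [objective, marginalCost, klCost, restrict_cost, restrict_ε, restrict_f₁, restrict_f₂,
    restrict_μ, restrict_ν, Set.domRestrict_apply, Pi.zero_apply, add_zero,
    ← sum_restrict_add_outMarg J p, ← sum_restrict_add_outMarg J q, outMarg_congr h]
  linarith

/-- `s` is the paper's `S_J(π)`: a minimizer of the subproblem of the cell `J` at `π`, extended by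
zero to a plan on `X × Y`. -/
structure IsCellMinimizer (J : Set X) (π s : X → Y → ℝ) : Prop where
  nonneg : 0 ≤ s
  eq_zero : ∀ x ∉ J, s x = 0
  isMinOn : IsMinOn ((P.restrict J).objective (outMarg J π)) (Set.Ici 0) (J.domRestrict s)

variable {P}

theorem _root_.IsSolveMap.isCellMinimizer {c : X → Y → ℝ} {ε : ℝ} (hε : 0 < ε) {φ₁ φ₂ : ℝ → EReal}
    (h₁ : AssumptionA φ₁) (h₂ : AssumptionA φ₂) {μ : X → ℝ} {ν : Y → ℝ} (hμ : ∀ x, 0 < μ x)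
    (hν : ∀ y, 0 < ν y) {n : ℕ} {Js : Fin n → Set X} {S : Fin n → (X → Y → ℝ) → X → Y → ℝ}
    (hS : IsSolveMap c ε φ₁ φ₂ μ ν Js S) (i : Fin n) (hπ : 0 ≤ π) :
    (ofAssumptionA c hε h₁ h₂ hμ hν).IsCellMinimizer (Js i) π (S i π) := by
  obtain ⟨hnonneg, hzero, hmin⟩ := hS i π hπ
  refine ⟨hnonneg, fun x hx => funext (hzero x hx), fun s hs => ?_⟩
  have hcoe (s : Js i → Y → ℝ) (hs : 0 ≤ s) :=
    EJfun_eq_coe_objective (fun (j : Js i) y => c j y) hε h₁ h₂ (fun j => hμ j) hν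
      (outMarg_nonneg (Js i) hπ) hs
  have hle := hmin s hs
  rw [hcoe s hs, hcoe _ fun j => hnonneg j] at hle
  exact EReal.coe_le_coe_iff.1 hle

theorem continuousOn_of_isCellMinimizer {T : (X → Y → ℝ) → X → Y → ℝ}
    (hT : ∀ π, 0 ≤ π → P.IsCellMinimizer J π (T π)) : ContinuousOn T (Set.Ici 0) := by
  have hcell : ContinuousOn (fun π => J.domRestrict (T π)) (Set.Ici 0) :=
    (P.restrict J).continuousOn_of_isMinOn_objective (continuous_outMarg J).continuousOn
      (fun _ hπ => outMarg_nonneg J hπ) (fun π hπ j => (hT π hπ).nonneg j)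
      fun π hπ => (hT π hπ).isMinOn
  refine continuousOn_pi.2 fun x => ?_
  by_cases hx : x ∈ J
  · exact continuousOn_pi.1 hcell ⟨x, hx⟩
  · exact continuousOn_const.congr fun π hπ => (hT π hπ).eq_zero x hx

theorem isMinOn_objective_of_forall_isMinOn_restrict [Nonempty X] [Nonempty Y] {ι : Type*}
    {Js : ι → Set X} (hJs : ⋃ i, Js i = Set.univ) (hπ : 0 ≤ π)
    (h : ∀ i, IsMinOn ((P.restrict (Js i)).objective (outMarg (Js i) π)) (Set.Ici 0)
      ((Js i).domRestrict π)) :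
    IsMinOn (P.objective 0) (Set.Ici 0) π := by
  have hpos (x : X) (y : Y) : 0 < π x y := by
    obtain ⟨i, hi⟩ := Set.iUnion_eq_univ_iff.1 hJs x
    exact (P.restrict (Js i)).pos_of_isMinOn_objective (outMarg_nonneg _ hπ) (fun j => hπ j) (h i)
      ⟨x, hi⟩ y
  refine isMinOn_of_convexOn_of_hasFDerivAt_zero (P.strictConvexOn_objective le_rfl).convexOn hπ <|
    hasFDerivAt_zero_of_isLocalMin_update (P.differentiableAt_objective le_rfl hpos) fun x => ?_
  obtain ⟨i, hi⟩ := Set.iUnion_eq_univ_iff.1 hJs x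
  have hnear : ∀ᶠ v in 𝓝 (π x), ∀ y, 0 < v y := eventually_all.2 fun y =>
    (continuous_apply y).continuousAt.eventually_const_lt (hpos x y)
  filter_upwards [hnear] with v hv
  have hupdate : 0 ≤ Function.update π x v :=
    le_update_iff.2 ⟨fun y => (hv y).le, fun x' _ => hπ x'⟩
  have hle : (P.restrict (Js i)).objective (outMarg (Js i) π) ((Js i).domRestrict π)
      ≤ (P.restrict (Js i)).objective (outMarg (Js i) π)
        ((Js i).domRestrict (Function.update π x v)) :=
    h i fun j => hupdate j
  have hsplit := P.objective_sub_objective_eq_restrict (J := Js i) (p := π)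
    (q := Function.update π x v) fun x' hx' =>
      Function.update_of_ne (ne_of_mem_of_not_mem hi hx').symm _ _
  rw [Function.update_eq_self]
  linarith

theorem exists_isMinOn_objective_tendsto [Nonempty X] [Nonempty Y] {n : ℕ} {Js : Fin n → Set X}
    {S : Fin n → (X → Y → ℝ) → X → Y → ℝ}
    {Θ : (Fin n → X → Y → ℝ) → (Fin n → X → Y → ℝ) → Fin n → ℝ} (hJs : ⋃ i, Js i = Set.univ)
    (hS : ∀ i π, 0 ≤ π → P.IsCellMinimizer (Js i) π (S i π))
    (hΘ : ∀ πJ tπ i, Θ πJ tπ i ∈ Set.Icc (0 : ℝ) 1) (hΘcont : Continuous (Function.uncurry Θ))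
    (hdec : ∀ π, 0 ≤ π → (∃ i, S i π ≠ cellRestr (Js i) π) →
      P.objective 0 (parUpdate Js S Θ π) < P.objective 0 π)
    {u : ℕ → X → Y → ℝ} (hu : ∀ k, 0 ≤ u k) (hanti : Antitone fun k => P.objective 0 (u k))
    (hfreq : ∃ᶠ k in atTop, P.objective 0 (u (k + 1)) ≤ P.objective 0 (parUpdate Js S Θ (u k))) :
    ∃ π, 0 ≤ π ∧ IsMinOn (P.objective 0) (Set.Ici 0) π ∧ Tendsto u atTop (𝓝 π) := by
  have hcont : ContinuousOn (P.objective 0) (Set.Ici 0) := P.continuousOn_objective le_rfl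
  have hupdate : ContinuousOn (parUpdate Js S Θ) (Set.Ici 0) :=
    continuousOn_parUpdate hΘcont fun i => continuousOn_of_isCellMinimizer (hS i)
  refine exists_isMinOn_tendsto_of_descent hcont
    (hcont.comp hupdate fun π hπ => parUpdate_nonneg hΘ hπ fun i => (hS i π hπ).nonneg)
    (P.isCompact_sublevel_objective le_rfl)
    (fun p hp q hq => P.eq_of_isMinOn_objective le_rfl hp hq) (fun π hπ hle => ?_) hu hanti hfreq
  have hfixed : ∀ i, S i π = cellRestr (Js i) π :=
    not_exists_not.1 fun hmove => (hdec π hπ hmove).not_ge hle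
  refine isMinOn_objective_of_forall_isMinOn_restrict hJs hπ fun i => ?_
  simpa only [hfixed, domRestrict_cellRestr] using (hS i π hπ).isMinOn

end Cells

end UnbalancedProblem

theorem Eglobal_ne_top {X Y : Type*} [Fintype X] [Fintype Y] (c : X → Y → ℝ) {ε : ℝ} (hε : 0 < ε)
    {φ₁ φ₂ : ℝ → EReal} (h₁ : AssumptionA φ₁) (h₂ : AssumptionA φ₂) {μ : X → ℝ} {ν : Y → ℝ}
    (hμ : ∀ x, 0 < μ x) (hν : ∀ y, 0 < ν y) {π : X → Y → ℝ} (hπ : 0 ≤ π) :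
    Eglobal c ε φ₁ φ₂ μ ν π ≠ ⊤ := by
  rw [UnbalancedProblem.Eglobal_eq_coe_objective c hε h₁ h₂ hμ hν hπ]
  exact EReal.coe_ne_top _

theorem parallel_domdec_converges_comparison_rule_general
    {X Y : Type*} [Fintype X] [Fintype Y] [Nonempty X] [Nonempty Y]
    (μ : X → ℝ) (ν : Y → ℝ) (hμ : ∀ x, 0 < μ x) (hν : ∀ y, 0 < ν y)
    (c : X → Y → ℝ) (ε : ℝ) (hε : 0 < ε)
    (φ₁ φ₂ : ℝ → EReal) (h₁ : AssumptionA φ₁) (h₂ : AssumptionA φ₂)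
    {n : ℕ} (Js : Fin n → Set X) (hJs : ⋃ i, Js i = Set.univ)
    (S : Fin n → (X → Y → ℝ) → X → Y → ℝ) (hS : IsSolveMap c ε φ₁ φ₂ μ ν Js S)
    (Θ₀ : (Fin n → X → Y → ℝ) → (Fin n → X → Y → ℝ) → Fin n → ℝ)
    (hΘ₀ : ∀ πJ tπ i, Θ₀ πJ tπ i ∈ Set.Icc (0 : ℝ) 1)
    (hΘ₀cont : Continuous (Function.uncurry Θ₀))
    (hΘ₀dec : ∀ π, 0 ≤ π → Eglobal c ε φ₁ φ₂ μ ν π ≠ ⊤ → (∃ i, S i π ≠ cellRestr (Js i) π) →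
      Eglobal c ε φ₁ φ₂ μ ν (parUpdate Js S Θ₀ π) < Eglobal c ε φ₁ φ₂ μ ν π)
    (iter : ℕ → X → Y → ℝ) (hiter : ∀ k, 0 ≤ iter k)
    (hanti : Antitone fun k => Eglobal c ε φ₁ φ₂ μ ν (iter k))
    (hfreq : ∃ᶠ k in atTop, Eglobal c ε φ₁ φ₂ μ ν (iter (k + 1))
      ≤ Eglobal c ε φ₁ φ₂ μ ν (parUpdate Js S Θ₀ (iter k))) :
    ∃ πopt : X → Y → ℝ, (∀ x y, 0 ≤ πopt x y) ∧
      (∀ π' : X → Y → ℝ, (∀ x y, 0 ≤ π' x y) →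
          Eglobal c ε φ₁ φ₂ μ ν πopt ≤ Eglobal c ε φ₁ φ₂ μ ν π') ∧
      (∀ π' : X → Y → ℝ, (∀ x y, 0 ≤ π' x y) →
          (∀ π'' : X → Y → ℝ, (∀ x y, 0 ≤ π'' x y) →
            Eglobal c ε φ₁ φ₂ μ ν π' ≤ Eglobal c ε φ₁ φ₂ μ ν π'') →
          π' = πopt) ∧
      ∀ x y, Tendsto (fun k => iter k x y) atTop (𝓝 (πopt x y)) := by
  let P := UnbalancedProblem.ofAssumptionA c hε h₁ h₂ hμ hν
  have hE {π : X → Y → ℝ} (hπ : 0 ≤ π) : Eglobal c ε φ₁ φ₂ μ ν π = (P.objective 0 π : EReal) :=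
    UnbalancedProblem.Eglobal_eq_coe_objective c hε h₁ h₂ hμ hν hπ
  have hE_le {p q : X → Y → ℝ} (hp : 0 ≤ p) (hq : 0 ≤ q) :
      Eglobal c ε φ₁ φ₂ μ ν p ≤ Eglobal c ε φ₁ φ₂ μ ν q ↔ P.objective 0 p ≤ P.objective 0 q := by
    rw [hE hp, hE hq, EReal.coe_le_coe_iff]
  have hupdate {π : X → Y → ℝ} (hπ : 0 ≤ π) : 0 ≤ parUpdate Js S Θ₀ π :=
    parUpdate_nonneg hΘ₀ hπ fun i => (hS i π hπ).1
  have hdec (π : X → Y → ℝ) (hπ : 0 ≤ π) (hmove : ∃ i, S i π ≠ cellRestr (Js i) π) :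
      P.objective 0 (parUpdate Js S Θ₀ π) < P.objective 0 π := by
    have hlt := hΘ₀dec π hπ (Eglobal_ne_top c hε h₁ h₂ hμ hν hπ) hmove
    rwa [hE hπ, hE (hupdate hπ), EReal.coe_lt_coe_iff] at hlt
  obtain ⟨πopt, hopt, hmin, hlim⟩ := UnbalancedProblem.exists_isMinOn_objective_tendsto hJs
    (fun i π => hS.isCellMinimizer hε h₁ h₂ hμ hν i) hΘ₀ hΘ₀cont hdec hiter
    (fun _ _ hkl => (hE_le (hiter _) (hiter _)).1 (hanti hkl))
    (hfreq.mono fun k => (hE_le (hiter _) (hupdate (hiter k))).1)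
  refine ⟨πopt, hopt, fun π hπ => (hE_le hopt hπ).2 (hmin hπ), fun π hπ hπmin => ?_, fun x y =>
    tendsto_pi_nhds.1 (tendsto_pi_nhds.1 hlim x) y⟩
  exact P.eq_of_isMinOn_objective le_rfl hπ hopt
    (fun q hq => (hE_le hπ hq).1 (hπmin q hq)) hmin

/-- if `Θ₀` is a continuous weight rule that strictly decreases the
score on every non-fixed point, and `Θ` is any weight rule performing at least as
well as `Θ₀` on every plan, then the parallel domain decomposition iterates with
rule `Θ` converge pointwise to the unique global minimizer of `E`. -/
theorem parallel_domdec_converges_comparison_rule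
    {X Y : Type*} [Fintype X] [Fintype Y] [Nonempty X] [Nonempty Y]
    (μ : X → ℝ) (ν : Y → ℝ) (hμ : ∀ x, 0 < μ x) (hν : ∀ y, 0 < ν y)
    (c : X → Y → ℝ) (ε : ℝ) (hε : 0 < ε)
    (φ₁ φ₂ : ℝ → EReal) (h₁ : AssumptionA φ₁) (h₂ : AssumptionA φ₂)
    {nA nB : ℕ} (JA : Fin nA → Set X) (JB : Fin nB → Set X)
    (hJA : IsFinPartition JA) (hJB : IsFinPartition JB)
    (SA : Fin nA → (X → Y → ℝ) → (X → Y → ℝ))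
    (SB : Fin nB → (X → Y → ℝ) → (X → Y → ℝ))
    (hSA : IsSolveMap c ε φ₁ φ₂ μ ν JA SA)
    (hSB : IsSolveMap c ε φ₁ φ₂ μ ν JB SB)
    -- the reference weight rules Θ₀
    (Θ0A : (Fin nA → X → Y → ℝ) → (Fin nA → X → Y → ℝ) → Fin nA → ℝ)
    (Θ0B : (Fin nB → X → Y → ℝ) → (Fin nB → X → Y → ℝ) → Fin nB → ℝ)
    (hΘ0A01 : ∀ πJ tπ i, Θ0A πJ tπ i ∈ Set.Icc (0 : ℝ) 1)
    (hΘ0B01 : ∀ πJ tπ i, Θ0B πJ tπ i ∈ Set.Icc (0 : ℝ) 1)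
    (hΘ0Acont : Continuous fun p : (Fin nA → X → Y → ℝ) × (Fin nA → X → Y → ℝ) =>
      Θ0A p.1 p.2)
    (hΘ0Bcont : Continuous fun p : (Fin nB → X → Y → ℝ) × (Fin nB → X → Y → ℝ) =>
      Θ0B p.1 p.2)
    (hΘ0Adec : ∀ π : X → Y → ℝ, (∀ x y, 0 ≤ π x y) →
      Eglobal c ε φ₁ φ₂ μ ν π ≠ ⊤ →
      (∃ i, SA i π ≠ cellRestr (JA i) π) →
      Eglobal c ε φ₁ φ₂ μ ν (parUpdate JA SA Θ0A π) < Eglobal c ε φ₁ φ₂ μ ν π)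
    (hΘ0Bdec : ∀ π : X → Y → ℝ, (∀ x y, 0 ≤ π x y) →
      Eglobal c ε φ₁ φ₂ μ ν π ≠ ⊤ →
      (∃ i, SB i π ≠ cellRestr (JB i) π) →
      Eglobal c ε φ₁ φ₂ μ ν (parUpdate JB SB Θ0B π) < Eglobal c ε φ₁ φ₂ μ ν π)
    -- the weight rules Θ, performing at least as well as Θ₀
    (ΘA : (Fin nA → X → Y → ℝ) → (Fin nA → X → Y → ℝ) → Fin nA → ℝ)
    (ΘB : (Fin nB → X → Y → ℝ) → (Fin nB → X → Y → ℝ) → Fin nB → ℝ)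
    (hΘA01 : ∀ πJ tπ i, ΘA πJ tπ i ∈ Set.Icc (0 : ℝ) 1)
    (hΘB01 : ∀ πJ tπ i, ΘB πJ tπ i ∈ Set.Icc (0 : ℝ) 1)
    (hcompA : ∀ π : X → Y → ℝ, (∀ x y, 0 ≤ π x y) →
      Eglobal c ε φ₁ φ₂ μ ν π ≠ ⊤ →
      Eglobal c ε φ₁ φ₂ μ ν (parUpdate JA SA ΘA π)
        ≤ Eglobal c ε φ₁ φ₂ μ ν (parUpdate JA SA Θ0A π))
    (hcompB : ∀ π : X → Y → ℝ, (∀ x y, 0 ≤ π x y) →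
      Eglobal c ε φ₁ φ₂ μ ν π ≠ ⊤ →
      Eglobal c ε φ₁ φ₂ μ ν (parUpdate JB SB ΘB π)
        ≤ Eglobal c ε φ₁ φ₂ μ ν (parUpdate JB SB Θ0B π))
    (π0 : X → Y → ℝ) (hπ0 : ∀ x y, 0 ≤ π0 x y)
    (hfin : Eglobal c ε φ₁ φ₂ μ ν π0 ≠ ⊤)
    (iter : ℕ → X → Y → ℝ) (hiter0 : iter 0 = π0)
    (hiterS : ∀ k : ℕ, iter (k + 1) =
      if (k + 1) % 2 = 1 then parUpdate JA SA ΘA (iter k)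
      else parUpdate JB SB ΘB (iter k)) :
    ∃ πopt : X → Y → ℝ, (∀ x y, 0 ≤ πopt x y) ∧
      (∀ π' : X → Y → ℝ, (∀ x y, 0 ≤ π' x y) →
          Eglobal c ε φ₁ φ₂ μ ν πopt ≤ Eglobal c ε φ₁ φ₂ μ ν π') ∧
      (∀ π' : X → Y → ℝ, (∀ x y, 0 ≤ π' x y) →
          (∀ π'' : X → Y → ℝ, (∀ x y, 0 ≤ π'' x y) →
            Eglobal c ε φ₁ φ₂ μ ν π' ≤ Eglobal c ε φ₁ φ₂ μ ν π'') →
          π' = πopt) ∧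
      ∀ x y, Filter.Tendsto (fun k => iter k x y) Filter.atTop (nhds (πopt x y)) := by
  have hfinite (π : X → Y → ℝ) (hπ : 0 ≤ π) : Eglobal c ε φ₁ φ₂ μ ν π ≠ ⊤ :=
    Eglobal_ne_top c hε h₁ h₂ hμ hν hπ
  obtain ⟨hiter, hanti, hfreq⟩ := antitone_and_frequently_of_alternating (s := Set.Ici 0)
    (F := Eglobal c ε φ₁ φ₂ μ ν)
    (fun π hπ => parUpdate_nonneg hΘA01 hπ fun i => (hSA i π hπ).1)
    (fun π hπ => parUpdate_nonneg hΘB01 hπ fun i => (hSB i π hπ).1)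
    (fun π hπ => apply_parUpdate_le hJA (hΘ0Adec π hπ (hfinite π hπ)) (hcompA π hπ (hfinite π hπ)))
    (fun π hπ => apply_parUpdate_le hJB (hΘ0Bdec π hπ (hfinite π hπ)) (hcompB π hπ (hfinite π hπ)))
    (hiter0 ▸ hπ0) hiterS
  exact parallel_domdec_converges_comparison_rule_general μ ν hμ hν c ε hε φ₁ φ₂ h₁ h₂ JA hJA.2.1
    SA hSA Θ0A hΘ0A01 hΘ0Acont hΘ0Adec iter hiter hanti
    (hfreq.mono fun k hk => hk ▸ hcompA _ (hiter k) (hfinite _ (hiter k)))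

end
end

section
/- Let X, Y, μ, ν, c, ε, φ₁, φ₂ (satisfying Assumption A) and partitions 𝒥_A, 𝒥_B of X be as in the sequential domain decomposition setting, and let (π^k)_{k≥0} be the sequential domain decomposition iterates started from a plan π⁰ with E(π⁰) < ∞. Then the scores are nonincreasing, E(π^{k+1}) ≤ E(π^k) for all k ≥ 0, and there exists a constant C < ∞ (depending only on E(π⁰), μ, ν, c, ε, φ₁, φ₂) such that 0 ≤ π^k(x,y) ≤ C·μ(x)ν(y) for all k ≥ 1 and all (x,y) ∈ X × Y. -/
/-!
Up to the penalty on the `Y`-marginal, the objective is a sum over the rows `x`. Hence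
`E(π) = E_J(π|_J | ν_{-J}) + R`, where the remainder `R` involves only the rows outside `J`. A cell
update at `J` leaves `R` and `ν_{-J}` unchanged and minimizes the first summand, so it cannot
increase `E`.

For the bound, the conjugate of `s ↦ s log s - s + 1` is `t ↦ exp t - 1`. As the marginal penalties
are nonnegative, the Fenchel–Young inequality gives, for every weight `a`,
`∑ a π ≤ E(π) + ε ∑ (exp ((a - c) / ε) - 1) μ ⊗ ν`. With `a = 1 / (μ ⊗ ν)` the left side dominates
each density `π(x,y) / (μ(x) ν(y))`, while `E(π)` never exceeds its initial value.
-/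

open Filter Topology
open scoped Classical

noncomputable section

open InformationTheory (klFun klFun_apply)

theorem mul_le_klFun_add_exp_sub_one {s : ℝ} (hs : 0 ≤ s) (t : ℝ) :
    s * t ≤ klFun s + (Real.exp t - 1) := by
  rw [klFun_apply]
  rcases hs.eq_or_lt with rfl | hs
  · simp [Real.exp_nonneg]
  · have tangent : t - Real.log s + 1 ≤ Real.exp t / s := by
      simpa only [Real.exp_sub, Real.exp_log hs] using Real.add_one_le_exp (t - Real.log s)
    rw [le_div_iff₀ hs] at tangent
    linarith

theorem mul_sub_exp_le_mul_add_klFun {ε m p : ℝ} (hε : 0 < ε) (hm : 0 < m) (hp : 0 ≤ p)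
    (a c : ℝ) :
    a * p - ε * (m * (Real.exp ((a - c) / ε) - 1)) ≤ c * p + ε * (m * klFun (p / m)) := by
  have young := mul_le_mul_of_nonneg_left
    (mul_le_klFun_add_exp_sub_one (div_nonneg hp hm.le) ((a - c) / ε)) (mul_pos hε hm).le
  have pairing : ε * m * (p / m * ((a - c) / ε)) = a * p - c * p := by
    field_simp
  linarith

section Divergence

variable {Z : Type*} [Fintype Z] {φ : ℝ → EReal} {ρ σ : Z → ℝ}

theorem KLfin_of_pos (hσ : ∀ z, 0 < σ z) :
    KLfin ρ σ = ((∑ z, σ z * klFun (ρ z / σ z) : ℝ) : EReal) := by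
  rw [KLfin, if_pos fun z hz => absurd hz (hσ z).ne']
  refine congrArg _ (Finset.sum_congr rfl fun z _ => ?_)
  have := (hσ z).ne'
  rw [klFun_apply]
  field_simp
  ring

theorem divergence_of_pos (hσ : ∀ z, 0 < σ z) :
    divergence φ ρ σ = ∑ z, (σ z : EReal) * φ (ρ z / σ z) := by
  simp [divergence, hσ, (hσ _).ne']

theorem divergence_nonneg (hφ : ∀ t, 0 ≤ φ t) (hσ : ∀ z, 0 < σ z) : 0 ≤ divergence φ ρ σ := by
  rw [divergence_of_pos hσ]
  exact Finset.sum_nonneg fun z _ => mul_nonneg (EReal.coe_nonneg.2 (hσ z).le) (hφ _)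

theorem divergence_eq_add_compl (hσ : ∀ z, 0 < σ z) (J : Set Z) :
    divergence φ ρ σ = divergence φ (fun z : J => ρ z) (fun z : J => σ z) +
      divergence φ (fun z : ↥Jᶜ => ρ z) (fun z : ↥Jᶜ => σ z) := by
  rw [divergence_of_pos hσ, divergence_of_pos fun z : J => hσ z,
    divergence_of_pos fun z : ↥Jᶜ => hσ z]
  exact (Fintype.sum_subtype_add_sum_subtype (· ∈ J) _).symm

end Divergence

theorem sum_subtype_add_outMarg {X Y : Type*} [Fintype X] (π : X → Y → ℝ) (J : Set X) (y : Y) :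
    ∑ x : J, π x y + outMarg J π y = ∑ x, π x y := by
  have outside : outMarg J π y = ∑ x : ↥Jᶜ, π x y := by
    simp only [outMarg, Set.indicator_apply]
    rw [← Finset.sum_filter]
    exact Finset.sum_subtype _ (by simp) _
  rw [outside]
  exact Fintype.sum_subtype_add_sum_subtype (· ∈ J) fun x => π x y

section Energy

/-- The functional `⟨c, π⟩ + ε KL(π | μ⊗ν) + D_{φ₁}(P_X π | μ)`, that is `E_J` without its
`Y`-marginal penalty, the only term that couples different rows of the plan. -/
def rowEnergy {W Y : Type*} [Fintype W] [Fintype Y] (c : W → Y → ℝ) (ε : ℝ) (φ₁ : ℝ → EReal)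
    (μ : W → ℝ) (ν : Y → ℝ) (π : W → Y → ℝ) : EReal :=
  ((∑ x, ∑ y, c x y * π x y : ℝ) : EReal)
    + (ε : EReal) * KLfin (fun p : W × Y => π p.1 p.2) (fun p : W × Y => μ p.1 * ν p.2)
    + divergence φ₁ (fun x => ∑ y, π x y) μ

/-- A bound for the densities `π(x,y) / (μ(x) ν(y))` of the plans with score at most `e`. -/
def densityBound {W Y : Type*} [Fintype W] [Fintype Y] (c : W → Y → ℝ) (ε : ℝ)
    (μ : W → ℝ) (ν : Y → ℝ) (e : ℝ) : ℝ :=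
  e + ∑ x, ∑ y, ε * (μ x * ν y * (Real.exp (((μ x * ν y)⁻¹ - c x y) / ε) - 1))

variable {W Y : Type*} [Fintype W] [Fintype Y] {c : W → Y → ℝ} {ε : ℝ} {φ₁ φ₂ : ℝ → EReal}
  {μ : W → ℝ} {ν νm : Y → ℝ} {π : W → Y → ℝ}

theorem rowEnergy_of_pos (hμ : ∀ x, 0 < μ x) (hν : ∀ y, 0 < ν y) :
    rowEnergy c ε φ₁ μ ν π =
      ((∑ x, ∑ y, (c x y * π x y + ε * (μ x * ν y * klFun (π x y / (μ x * ν y)))) : ℝ) : EReal)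
        + divergence φ₁ (fun x => ∑ y, π x y) μ := by
  rw [rowEnergy, KLfin_of_pos fun p : W × Y => mul_pos (hμ p.1) (hν p.2), ← EReal.coe_mul,
    ← EReal.coe_add, Fintype.sum_prod_type]
  simp only [Finset.mul_sum, Finset.sum_add_distrib]

theorem rowEnergy_eq_add_compl (hμ : ∀ x, 0 < μ x) (hν : ∀ y, 0 < ν y) (J : Set W) :
    rowEnergy c ε φ₁ μ ν π =
      rowEnergy (fun x : J => c x) ε φ₁ (fun x : J => μ x) ν (fun x : J => π x) +
      rowEnergy (fun x : ↥Jᶜ => c x) ε φ₁ (fun x : ↥Jᶜ => μ x) ν (fun x : ↥Jᶜ => π x) := by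
  rw [rowEnergy_of_pos hμ hν, rowEnergy_of_pos (fun x : J => hμ x) hν,
    rowEnergy_of_pos (fun x : ↥Jᶜ => hμ x) hν, divergence_eq_add_compl hμ J, add_add_add_comm,
    ← EReal.coe_add]
  congr 2
  exact (Fintype.sum_subtype_add_sum_subtype (· ∈ J) _).symm

theorem EJfun_eq_rowEnergy_add_divergence :
    EJfun c ε φ₁ φ₂ μ ν νm π =
      rowEnergy c ε φ₁ μ ν π + divergence φ₂ (fun y => (∑ x, π x y) + νm y) ν :=
  rfl

theorem Eglobal_eq_EJfun_add_rowEnergy_compl (hμ : ∀ x, 0 < μ x) (hν : ∀ y, 0 < ν y)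
    (J : Set W) :
    Eglobal c ε φ₁ φ₂ μ ν π =
      EJfun (fun x : J => c x) ε φ₁ φ₂ (fun x : J => μ x) ν (outMarg J π) (fun x : J => π x) +
      rowEnergy (fun x : ↥Jᶜ => c x) ε φ₁ (fun x : ↥Jᶜ => μ x) ν (fun x : ↥Jᶜ => π x) := by
  rw [Eglobal, EJfun_eq_rowEnergy_add_divergence, EJfun_eq_rowEnergy_add_divergence,
    rowEnergy_eq_add_compl hμ hν J, add_right_comm]
  simp only [sum_subtype_add_outMarg, add_zero]

theorem sum_mul_sub_exp_le_EJfun (hε : 0 < ε) (hφ₁ : ∀ t, 0 ≤ φ₁ t) (hφ₂ : ∀ t, 0 ≤ φ₂ t)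
    (hμ : ∀ x, 0 < μ x) (hν : ∀ y, 0 < ν y) (hπ : ∀ x y, 0 ≤ π x y) (a : W → Y → ℝ) :
    ((∑ x, ∑ y, (a x y * π x y -
        ε * (μ x * ν y * (Real.exp ((a x y - c x y) / ε) - 1))) : ℝ) : EReal)
      ≤ EJfun c ε φ₁ φ₂ μ ν νm π := by
  rw [EJfun_eq_rowEnergy_add_divergence, rowEnergy_of_pos hμ hν, add_assoc]
  refine le_add_of_le_of_nonneg (EReal.coe_le_coe_iff.2 ?_)
    (add_nonneg (divergence_nonneg hφ₁ hμ) (divergence_nonneg hφ₂ hν))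
  exact Finset.sum_le_sum fun x _ => Finset.sum_le_sum fun y _ =>
    mul_sub_exp_le_mul_add_klFun hε (mul_pos (hμ x) (hν y)) (hπ x y) (a x y) (c x y)

theorem le_densityBound_mul_of_EJfun_le (hε : 0 < ε) (hφ₁ : ∀ t, 0 ≤ φ₁ t)
    (hφ₂ : ∀ t, 0 ≤ φ₂ t) (hμ : ∀ x, 0 < μ x) (hν : ∀ y, 0 < ν y) (hπ : ∀ x y, 0 ≤ π x y)
    {e : ℝ} (he : EJfun c ε φ₁ φ₂ μ ν νm π ≤ (e : EReal)) (x : W) (y : Y) :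
    π x y ≤ densityBound c ε μ ν e * (μ x * ν y) := by
  have hm : ∀ x y, 0 < μ x * ν y := fun x y => mul_pos (hμ x) (hν y)
  have density_nonneg : ∀ x y, 0 ≤ (μ x * ν y)⁻¹ * π x y := fun x y =>
    mul_nonneg (inv_nonneg.2 (hm x y).le) (hπ x y)
  have sum_density_le : ∑ x, ∑ y, (μ x * ν y)⁻¹ * π x y ≤ densityBound c ε μ ν e := by
    have h := EReal.coe_le_coe_iff.1 <|
      (sum_mul_sub_exp_le_EJfun hε hφ₁ hφ₂ hμ hν hπ fun x y => (μ x * ν y)⁻¹).trans he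
    simp only [Finset.sum_sub_distrib] at h
    exact sub_le_iff_le_add.1 h
  rw [← inv_mul_le_iff₀' (hm x y)]
  calc (μ x * ν y)⁻¹ * π x y
      ≤ ∑ y, (μ x * ν y)⁻¹ * π x y :=
        Finset.single_le_sum (fun y _ => density_nonneg x y) (Finset.mem_univ y)
    _ ≤ ∑ x, ∑ y, (μ x * ν y)⁻¹ * π x y :=
        Finset.single_le_sum (f := fun x => ∑ y, (μ x * ν y)⁻¹ * π x y)
          (fun x _ => Finset.sum_nonneg fun y _ => density_nonneg x y) (Finset.mem_univ x)
    _ ≤ densityBound c ε μ ν e := sum_density_le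

end Energy

section CellUpdate

variable {X Y : Type*} [Fintype X] [Fintype Y] {c : X → Y → ℝ} {ε : ℝ} {φ₁ φ₂ : ℝ → EReal}
  {μ : X → ℝ} {ν : Y → ℝ} {π : X → Y → ℝ} {update : Set X → (X → Y → ℝ) → (X → Y → ℝ)}

theorem IsCellUpdate.Eglobal_le (hu : IsCellUpdate c ε φ₁ φ₂ μ ν update)
    (hμ : ∀ x, 0 < μ x) (hν : ∀ y, 0 < ν y) (hπ : ∀ x y, 0 ≤ π x y) (J : Set X) :
    Eglobal c ε φ₁ φ₂ μ ν (update J π) ≤ Eglobal c ε φ₁ φ₂ μ ν π := by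
  obtain ⟨-, eq_outside, minimal⟩ := hu J π hπ
  have restrict_compl_eq : (fun x : ↥Jᶜ => update J π x) = fun x : ↥Jᶜ => π x :=
    funext fun x => funext (eq_outside x x.2)
  have outMarg_eq : outMarg J (update J π) = outMarg J π :=
    funext fun y => congrArg (fun f : X → ℝ => ∑ x, f x) <|
      Set.indicator_congr fun x hx => eq_outside x hx y
  rw [Eglobal_eq_EJfun_add_rowEnergy_compl hμ hν J, Eglobal_eq_EJfun_add_rowEnergy_compl hμ hν J,
    restrict_compl_eq, outMarg_eq]
  exact add_le_add_left (minimal (fun x y => π x y) fun x y => hπ x y) _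

theorem IsCellUpdate.foldl_nonneg (hu : IsCellUpdate c ε φ₁ φ₂ μ ν update)
    (hπ : ∀ x y, 0 ≤ π x y) (cells : List (Set X)) :
    ∀ x y, 0 ≤ cells.foldl (fun p J => update J p) π x y := by
  induction cells generalizing π with
  | nil => exact hπ
  | cons J _ ih => exact ih (hu J π hπ).1

theorem IsCellUpdate.Eglobal_foldl_le (hu : IsCellUpdate c ε φ₁ φ₂ μ ν update)
    (hμ : ∀ x, 0 < μ x) (hν : ∀ y, 0 < ν y) (hπ : ∀ x y, 0 ≤ π x y) (cells : List (Set X)) :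
    Eglobal c ε φ₁ φ₂ μ ν (cells.foldl (fun p J => update J p) π) ≤
      Eglobal c ε φ₁ φ₂ μ ν π := by
  induction cells generalizing π with
  | nil => exact le_rfl
  | cons J _ ih => exact (ih (hu J π hπ).1).trans (hu.Eglobal_le hμ hν hπ J)

theorem sequential_domdec_monotone_and_bounded_general
    (hμ : ∀ x, 0 < μ x) (hν : ∀ y, 0 < ν y) (hε : 0 < ε)
    (hφ₁ : ∀ t, 0 ≤ φ₁ t) (hφ₂ : ∀ t, 0 ≤ φ₂ t)
    (hu : IsCellUpdate c ε φ₁ φ₂ μ ν update) (cells : ℕ → List (Set X)) (iter : ℕ → X → Y → ℝ)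
    (hiter : ∀ k, iter (k + 1) = (cells k).foldl (fun p J => update J p) (iter k))
    (h0 : ∀ x y, 0 ≤ iter 0 x y) {e : ℝ} (he : Eglobal c ε φ₁ φ₂ μ ν (iter 0) ≤ (e : EReal)) :
    Antitone (fun k => Eglobal c ε φ₁ φ₂ μ ν (iter k)) ∧
      ∀ k x y, 0 ≤ iter k x y ∧ iter k x y ≤ densityBound c ε μ ν e * (μ x * ν y) := by
  have nonneg : ∀ k x y, 0 ≤ iter k x y := by
    intro k
    induction k with
    | zero => exact h0
    | succ k ih => exact hiter k ▸ hu.foldl_nonneg ih (cells k)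
  have antitone : Antitone fun k => Eglobal c ε φ₁ φ₂ μ ν (iter k) :=
    antitone_nat_of_succ_le fun k => hiter k ▸ hu.Eglobal_foldl_le hμ hν (nonneg k) (cells k)
  exact ⟨antitone, fun k x y => ⟨nonneg k x y, le_densityBound_mul_of_EJfun_le hε hφ₁ hφ₂ hμ hν
    (nonneg k) ((antitone k.zero_le).trans he) x y⟩⟩

end CellUpdate

/-- along the sequential domain decomposition iterates the scores
are nonincreasing, and there is a constant `C` — depending only on (an upper
bound `e0` for) `E(π⁰)` and on `μ, ν, c, ε, φ₁, φ₂` — such that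
`0 ≤ π^k(x,y) ≤ C·μ(x)ν(y)` for all `k ≥ 1`. -/
theorem sequential_domdec_monotone_and_bounded
    {X Y : Type*} [Fintype X] [Fintype Y] [Nonempty X] [Nonempty Y]
    (μ : X → ℝ) (ν : Y → ℝ) (hμ : ∀ x, 0 < μ x) (hν : ∀ y, 0 < ν y)
    (c : X → Y → ℝ) (ε : ℝ) (hε : 0 < ε)
    (φ₁ φ₂ : ℝ → EReal) (h₁ : AssumptionA φ₁) (h₂ : AssumptionA φ₂)
    (e0 : ℝ) :
    ∃ C : ℝ, ∀ {nA nB : ℕ} (JA : Fin nA → Set X) (JB : Fin nB → Set X),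
      IsFinPartition JA → IsFinPartition JB →
      ∀ update : Set X → (X → Y → ℝ) → (X → Y → ℝ),
        IsCellUpdate c ε φ₁ φ₂ μ ν update →
      ∀ π0 : X → Y → ℝ, (∀ x y, 0 ≤ π0 x y) →
        Eglobal c ε φ₁ φ₂ μ ν π0 ≠ ⊤ →
        Eglobal c ε φ₁ φ₂ μ ν π0 ≤ ((e0 : ℝ) : EReal) →
      ∀ iter : ℕ → X → Y → ℝ, iter 0 = π0 →
        (∀ k : ℕ, iter (k + 1) =
          if (k + 1) % 2 = 1 then sweep update JA (iter k)
          else sweep update JB (iter k)) →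
        (∀ k : ℕ, Eglobal c ε φ₁ φ₂ μ ν (iter (k + 1))
            ≤ Eglobal c ε φ₁ φ₂ μ ν (iter k)) ∧
        ∀ k : ℕ, 1 ≤ k → ∀ x y,
          0 ≤ iter k x y ∧ iter k x y ≤ C * (μ x * ν y) := by
  refine ⟨densityBound c ε μ ν e0, ?_⟩
  rintro nA nB JA JB - - update hu _ h0 - he iter rfl hiter
  obtain ⟨antitone, bounds⟩ := sequential_domdec_monotone_and_bounded_general hμ hν hε h₁.2.1 h₂.2.1
    hu (fun k => if (k + 1) % 2 = 1 then List.ofFn JA else List.ofFn JB) iter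
    (fun k => by rw [hiter k]; split_ifs <;> rfl) h0 he
  exact ⟨fun k => antitone k.le_succ, fun k _ => bounds k⟩

end
end

section
/- Weak duality for the unbalanced cell subproblem on finite spaces: let X_J and Y be nonempty finite sets, μ_J: X_J → ℝ and ν: Y → ℝ strictly positive weight functions, c: X_J × Y → ℝ a cost, ε > 0, φ₁, φ₂ entropy functions, and ν_{-J}: Y → ℝ≥0. Then for every nonnegative plan π: X_J × Y → ℝ≥0 and all potentials α: X_J → ℝ, β: Y → ℝ, one has D_J(α, β | ν_{-J}) ≤ E_J(π | ν_{-J}). -/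
open Filter Topology
open scoped Classical

noncomputable section

/-!
Fenchel–Young for each `φᵢ`, scaled by the weights and summed, bounds `∑ -α · P_X π` and
`∑ -β · (P_Y π + νm)` by a divergence term plus the corresponding conjugate term. Gibbs' inequality
against the reference weight tilted by `exp ((α + β - c) / ε)` bounds `∑ (α + β) · π` plus the
exponential term of the dual by the transport and Kullback–Leibler terms of the primal. Adding the
three bounds, everything involving `π` on the dual side cancels.
-/

/-- Properness of an extended-real function, the part of `IsEntropyFn` on which Fenchel–Young
rests: the value `-∞` is never taken and some value is finite. -/
def IsProperFn (φ : ℝ → EReal) : Prop :=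
  (∀ x, φ x ≠ ⊥) ∧ ∃ x, φ x ≠ ⊤

theorem IsEntropyFn.isProperFn {φ : ℝ → EReal} (hφ : IsEntropyFn φ) : IsProperFn φ :=
  let ⟨_, _, ne_bot, _, x, _, lt_top⟩ := hφ
  ⟨ne_bot, x, lt_top.ne⟩

section Conjugate

theorem sub_le_conjFn (φ : ℝ → EReal) (z x : ℝ) : ((z * x : ℝ) : EReal) - φ x ≤ conjFn φ z :=
  le_iSup (fun x : ℝ => ((z * x : ℝ) : EReal) - φ x) x

variable {φ : ℝ → EReal}

theorem IsProperFn.conjFn_ne_bot (hφ : IsProperFn φ) (z : ℝ) : conjFn φ z ≠ ⊥ := by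
  obtain ⟨-, x, hx⟩ := hφ
  refine ne_bot_of_le_ne_bot ?_ (sub_le_conjFn φ z x)
  rw [sub_eq_add_neg, Ne, EReal.add_eq_bot_iff, EReal.neg_eq_bot_iff, not_or]
  exact ⟨EReal.coe_ne_bot _, hx⟩

theorem IsProperFn.mul_le_add_conjFn (hφ : IsProperFn φ) (z x : ℝ) :
    ((z * x : ℝ) : EReal) ≤ φ x + conjFn φ z := by
  rw [add_comm]
  exact (EReal.sub_le_iff_le_add (.inl (hφ.1 x)) (.inr (hφ.conjFn_ne_bot z))).1
    (sub_le_conjFn φ z x)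

theorem IsProperFn.mul_le_perspective_add_conjFn (hφ : IsProperFn φ) {s : ℝ} (hs : 0 < s)
    (z r : ℝ) :
    ((z * r : ℝ) : EReal) ≤ (s : EReal) * φ (r / s) + (s : EReal) * conjFn φ z := by
  have hs' : (0 : EReal) ≤ s := EReal.coe_nonneg.2 hs.le
  calc ((z * r : ℝ) : EReal) = (s : EReal) * ((z * (r / s) : ℝ) : EReal) := by
        rw [← EReal.coe_mul]
        congr 1
        field_simp
    _ ≤ (s : EReal) * (φ (r / s) + conjFn φ z) :=
        mul_le_mul_of_nonneg_left (hφ.mul_le_add_conjFn z (r / s)) hs'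
    _ = (s : EReal) * φ (r / s) + (s : EReal) * conjFn φ z :=
        EReal.left_distrib_of_nonneg_of_ne_top hs' (EReal.coe_ne_top s) _ _

end Conjugate

section Divergence

variable {Z : Type*} [Fintype Z] {ρ σ : Z → ℝ}

theorem divergence_eq_sum_of_absolutelyContinuous (φ : ℝ → EReal)
    (hρσ : ∀ z, σ z = 0 → ρ z = 0) :
    divergence φ ρ σ = ∑ z, if 0 < σ z then (σ z : EReal) * φ (ρ z / σ z) else 0 := by
  have singular_mass : ∑ z, (if σ z = 0 then ρ z else 0) = 0 :=
    Finset.sum_eq_zero fun z _ => by simpa using hρσ z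
  rw [divergence, singular_mass, EReal.coe_zero, mul_zero, add_zero]

theorem IsProperFn.sum_mul_le_divergence_add {φ : ℝ → EReal} (hφ : IsProperFn φ)
    (hσ : ∀ z, 0 ≤ σ z) (hρσ : ∀ z, σ z = 0 → ρ z = 0) (a : Z → ℝ) :
    ((∑ z, a z * ρ z : ℝ) : EReal) ≤
      divergence φ ρ σ + ∑ z, (σ z : EReal) * conjFn φ (a z) := by
  rw [divergence_eq_sum_of_absolutelyContinuous φ hρσ, ← Finset.sum_add_distrib, ereal_coe_sum]
  refine Finset.sum_le_sum fun z _ => ?_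
  rcases (hσ z).eq_or_lt with h0 | hpos
  · simp [← h0, hρσ z h0.symm]
  · simpa [hpos] using hφ.mul_le_perspective_add_conjFn hpos (a z) (ρ z)

end Divergence

section KullbackLeibler

-- This is `klFun ≥ 0` at `p / (k * exp t)`: Gibbs' inequality for the exponentially tilted weight.
theorem mul_add_one_sub_exp_mul_le {p k : ℝ} (hp : 0 ≤ p) (hk : 0 ≤ k) (hpk : k = 0 → p = 0)
    (t : ℝ) :
    t * p + (1 - Real.exp t) * k ≤ p * Real.log (p / k) - p + k := by
  rcases hp.eq_or_lt with rfl | hp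
  · linarith [mul_nonneg (Real.exp_pos t).le hk]
  have hk : 0 < k := hk.lt_of_ne' fun h => hp.ne' (hpk h)
  have tilted_pos : 0 < k * Real.exp t := mul_pos hk (Real.exp_pos t)
  have tilted_nonneg : 0 ≤ k * Real.exp t * InformationTheory.klFun (p / (k * Real.exp t)) :=
    mul_nonneg tilted_pos.le (InformationTheory.klFun_nonneg (div_nonneg hp.le tilted_pos.le))
  have tilted_log : Real.log (p / (k * Real.exp t)) = Real.log (p / k) - t := by
    rw [← div_div, Real.log_div (div_pos hp hk).ne' (Real.exp_pos t).ne', Real.log_exp]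
  have tilted_eq : k * Real.exp t * InformationTheory.klFun (p / (k * Real.exp t)) =
      p * (Real.log (p / k) - t) + k * Real.exp t - p := by
    rw [InformationTheory.klFun_apply, tilted_log]
    field_simp
  linarith

variable {Z : Type*} [Fintype Z] {ρ σ : Z → ℝ}

theorem sum_mul_add_one_sub_exp_mul_le_KLfin (hρ : ∀ z, 0 ≤ ρ z) (hσ : ∀ z, 0 ≤ σ z)
    (t : Z → ℝ) :
    ((∑ z, (t z * ρ z + (1 - Real.exp (t z)) * σ z) : ℝ) : EReal) ≤ KLfin ρ σ := by
  unfold KLfin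
  split_ifs with hρσ
  · exact EReal.coe_le_coe_iff.2 <| Finset.sum_le_sum fun z _ =>
      mul_add_one_sub_exp_mul_le (hρ z) (hσ z) (hρσ z) (t z)
  · exact le_top

theorem sum_mul_add_le_sum_mul_add_KLfin (hρ : ∀ z, 0 ≤ ρ z) (hσ : ∀ z, 0 ≤ σ z)
    {ε : ℝ} (hε : 0 < ε) (c f : Z → ℝ) :
    ((∑ z, f z * ρ z + ε * ∑ z, (1 - Real.exp ((f z - c z) / ε)) * σ z : ℝ) : EReal) ≤
      ((∑ z, c z * ρ z : ℝ) : EReal) + (ε : EReal) * KLfin ρ σ := by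
  have split_energy : ∑ z, f z * ρ z + ε * ∑ z, (1 - Real.exp ((f z - c z) / ε)) * σ z =
      ∑ z, c z * ρ z + ε * ∑ z, ((f z - c z) / ε * ρ z +
        (1 - Real.exp ((f z - c z) / ε)) * σ z) := by
    simp only [Finset.mul_sum, ← Finset.sum_add_distrib]
    refine Finset.sum_congr rfl fun z _ => ?_
    field_simp
    ring
  rw [split_energy, EReal.coe_add, EReal.coe_mul]
  gcongr
  exact sum_mul_add_one_sub_exp_mul_le_KLfin hρ hσ _

end KullbackLeibler

theorem sum_add_mul_eq_sum_marginals {X Y R : Type*} [Fintype X] [Fintype Y] [CommSemiring R]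
    (α : X → R) (β : Y → R) (π : X → Y → R) :
    ∑ x, ∑ y, (α x + β y) * π x y = ∑ x, α x * ∑ y, π x y + ∑ y, β y * ∑ x, π x y := by
  simp only [add_mul, Finset.sum_add_distrib, Finset.mul_sum]
  rw [Finset.sum_comm (f := fun x y => β y * π x y)]

section Duality

variable {X Y : Type*} [Fintype X] [Fintype Y] {μ : X → ℝ} {ν : Y → ℝ} {π : X → Y → ℝ}

theorem transport_dual_le_transport_primal (hμ : ∀ x, 0 ≤ μ x) (hν : ∀ y, 0 ≤ ν y)
    (hπ : ∀ x y, 0 ≤ π x y) (c : X → Y → ℝ) {ε : ℝ} (hε : 0 < ε) (α : X → ℝ) (β : Y → ℝ) :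
    ((∑ x, α x * ∑ y, π x y + ∑ y, β y * ∑ x, π x y +
        ε * ∑ x, ∑ y, (1 - Real.exp ((α x + β y - c x y) / ε)) * (μ x * ν y) : ℝ) : EReal) ≤
      ((∑ x, ∑ y, c x y * π x y : ℝ) : EReal) +
        (ε : EReal) * KLfin (fun p : X × Y => π p.1 p.2) (fun p : X × Y => μ p.1 * ν p.2) := by
  simpa only [← sum_add_mul_eq_sum_marginals, Fintype.sum_prod_type] using
    sum_mul_add_le_sum_mul_add_KLfin (fun p : X × Y => hπ p.1 p.2)
      (fun p => mul_nonneg (hμ p.1) (hν p.2)) hε (fun p => c p.1 p.2) (fun p => α p.1 + β p.2)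

theorem DJfun_eq_transport_add_marginal_terms (c : X → Y → ℝ) (ε : ℝ) (φ₁ φ₂ : ℝ → EReal)
    (μ : X → ℝ) (ν νm : Y → ℝ) (π : X → Y → ℝ) (α : X → ℝ) (β : Y → ℝ) :
    DJfun c ε φ₁ φ₂ μ ν νm α β =
      ((∑ x, α x * ∑ y, π x y + ∑ y, β y * ∑ x, π x y +
        ε * ∑ x, ∑ y, (1 - Real.exp ((α x + β y - c x y) / ε)) * (μ x * ν y) : ℝ) : EReal)
      + (((∑ x, -α x * ∑ y, π x y : ℝ) : EReal) - ∑ x, (μ x : EReal) * conjFn φ₁ (-α x))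
      + (((∑ y, -β y * (∑ x, π x y + νm y) : ℝ) : EReal)
        - ∑ y, (ν y : EReal) * conjFn φ₂ (-β y)) := by
  set planTerm := ∑ x, α x * ∑ y, π x y + ∑ y, β y * ∑ x, π x y
  set kernelTerm := ε * ∑ x, ∑ y, (1 - Real.exp ((α x + β y - c x y) / ε)) * (μ x * ν y)
  set xTerm := ∑ x, -α x * ∑ y, π x y
  set yTerm := ∑ y, -β y * (∑ x, π x y + νm y)
  set C₁ := ∑ x, (μ x : EReal) * conjFn φ₁ (-α x)
  set C₂ := ∑ y, (ν y : EReal) * conjFn φ₂ (-β y)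
  have plan_cancels :
      kernelTerm + -∑ y, β y * νm y = planTerm + kernelTerm + xTerm + yTerm := by
    simp only [planTerm, xTerm, yTerm, neg_mul, mul_add, Finset.sum_neg_distrib,
      Finset.sum_add_distrib]
    ring
  calc DJfun c ε φ₁ φ₂ μ ν νm α β
      = (kernelTerm : EReal) - C₁ - C₂ - ((∑ y, β y * νm y : ℝ) : EReal) := rfl
    _ = ((kernelTerm + -∑ y, β y * νm y : ℝ) : EReal) + -C₁ + -C₂ := by
        simp only [EReal.coe_add, EReal.coe_neg, sub_eq_add_neg]
        ac_rfl
    _ = ((planTerm + kernelTerm : ℝ) : EReal) + (xTerm - C₁) + (yTerm - C₂) := by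
        rw [plan_cancels, EReal.coe_add _ yTerm, EReal.coe_add _ xTerm]
        simp only [sub_eq_add_neg]
        ac_rfl

theorem weak_duality_cell_subproblem_general
    (hμ : ∀ x, 0 ≤ μ x) (hν : ∀ y, 0 ≤ ν y) (c : X → Y → ℝ) {ε : ℝ} (hε : 0 < ε)
    {φ₁ φ₂ : ℝ → EReal} (h₁ : IsProperFn φ₁) (h₂ : IsProperFn φ₂) (νm : Y → ℝ)
    (hπ : ∀ x y, 0 ≤ π x y) (hπμ : ∀ x, μ x = 0 → ∑ y, π x y = 0)
    (hπν : ∀ y, ν y = 0 → ∑ x, π x y + νm y = 0) (α : X → ℝ) (β : Y → ℝ) :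
    DJfun c ε φ₁ φ₂ μ ν νm α β ≤ EJfun c ε φ₁ φ₂ μ ν νm π := by
  rw [DJfun_eq_transport_add_marginal_terms c ε φ₁ φ₂ μ ν νm π]
  exact add_le_add
    (add_le_add (transport_dual_le_transport_primal hμ hν hπ c hε α β)
      (EReal.sub_le_of_le_add (h₁.sum_mul_le_divergence_add hμ hπμ fun x => -α x)))
    (EReal.sub_le_of_le_add (h₂.sum_mul_le_divergence_add hν hπν fun y => -β y))

end Duality

/-- weak duality for the unbalanced cell subproblem on finite
spaces: the dual objective never exceeds the primal objective. -/
theorem weak_duality_cell_subproblem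
    {X Y : Type*} [Fintype X] [Fintype Y] [Nonempty X] [Nonempty Y]
    (μ : X → ℝ) (ν : Y → ℝ) (hμ : ∀ x, 0 < μ x) (hν : ∀ y, 0 < ν y)
    (c : X → Y → ℝ) (ε : ℝ) (hε : 0 < ε)
    (φ₁ φ₂ : ℝ → EReal) (h₁ : IsEntropyFn φ₁) (h₂ : IsEntropyFn φ₂)
    (νm : Y → ℝ) (hνm : ∀ y, 0 ≤ νm y)
    (π : X → Y → ℝ) (hπ : ∀ x y, 0 ≤ π x y)
    (α : X → ℝ) (β : Y → ℝ) :
    DJfun c ε φ₁ φ₂ μ ν νm α β ≤ EJfun c ε φ₁ φ₂ μ ν νm π := by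
  exact weak_duality_cell_subproblem_general (fun x => (hμ x).le) (fun y => (hν y).le) c hε
    h₁.isProperFn h₂.isProperFn νm hπ (fun x h0 => absurd h0 (hμ x).ne')
    (fun y h0 => absurd h0 (hν y).ne') α β

end
end

section
/- Primal–dual gap formula for KL soft-marginals: let X_J and Y be nonempty finite sets, μ_J: X_J → ℝ and ν: Y → ℝ strictly positive weight functions, c: X_J × Y → ℝ a cost, ε, λ > 0, and take D₁ = D₂ = λ·KL (i.e. φ₁(s) = φ₂(s) = λ(s log s − s + 1), with conjugate φᵢ*(z) = λ(e^{z/λ} − 1)). Let ν_{-J}: Y → ℝ≥0, and suppose α: X_J → ℝ and β: Y → ℝ satisfy, for every y ∈ Y, the Y-half Sinkhorn iteration identity exp(−β(y)/ε)·[exp(−β(y)/λ) − ν_{-J}(y)/ν(y)] = Σ_{x∈X_J} exp((α(x) − c(x,y))/ε)·μ_J(x). Define π(x,y) := exp((α(x)+β(y)−c(x,y))/ε)·μ_J(x)ν(y). Then E_J(π | ν_{-J}) − D_J(α, β | ν_{-J}) = λ·KL(P_X π | e^{−α/λ}·μ_J), where (e^{−α/λ}·μ_J)(x) := exp(−α(x)/λ)·μ_J(x).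 -/
open Filter Topology

noncomputable section

/-!
Each soft marginal contributes to the gap its Fenchel–Young gap, and for `lam * KL(· | σ)` the
Fenchel–Young gap at `(ρ, -φ)` is again a divergence, namely `lam * KL(ρ | e^{-φ/lam} · σ)`. For the
scaling plan, the transport and entropy terms contribute exactly the pairings of the potentials with
the marginals that these two gaps require. The half-iteration identity says that
`P_Y π + ν_{-J} = e^{-β/lam} · ν`, so the `Y`-gap vanishes.
-/

section Definitions

variable {ι X Y : Type*} [Fintype ι] [Fintype X] [Fintype Y]

/-- Kullback–Leibler divergence `KL(ρ | σ)` of weight functions on a finite type. It is real-valued,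
so it is the usual divergence only for `0 ≤ ρ`, `0 ≤ σ` with `ρ` vanishing wherever `σ` does; the
value `+∞` is not encoded. -/
def klWeights (ρ σ : ι → ℝ) : ℝ :=
  ∑ i, (ρ i * Real.log (ρ i / σ i) - ρ i + σ i)

/-- Convex conjugate of `lam * KL(· | σ)`, evaluated at `z`: the `σ`-weighted sum of
`φ*(z) = lam * (exp (z / lam) - 1)`. -/
def klConjugate (lam : ℝ) (σ z : ι → ℝ) : ℝ :=
  ∑ i, lam * (Real.exp (z i / lam) - 1) * σ i

/-- The weight function `e^{-φ/lam} · σ` attached to a dual potential `φ`. -/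
def expTilt (lam : ℝ) (φ σ : ι → ℝ) : ι → ℝ :=
  fun i => Real.exp (-(φ i) / lam) * σ i

/-- First marginal `P_X π` of a plan. -/
def fstMarginal (π : X → Y → ℝ) : X → ℝ :=
  fun x => ∑ y, π x y

/-- Second marginal `P_Y π` of a plan. -/
def sndMarginal (π : X → Y → ℝ) : Y → ℝ :=
  fun y => ∑ x, π x y

/-- The diagonal-scaling (Gibbs) plan: the primal candidate attached to the dual potentials
`α`, `β`. -/
def scalingPlan (ε : ℝ) (c : X → Y → ℝ) (μ : X → ℝ) (ν : Y → ℝ) (α : X → ℝ) (β : Y → ℝ) :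
    X → Y → ℝ :=
  fun x y => Real.exp ((α x + β y - c x y) / ε) * (μ x * ν y)

/-- Primal objective `E_J(π | ν_{-J})`, with separate strengths `lam₁`, `lam₂` for the two
soft-marginal penalties. The divergence from `μ ⊗ ν` is summed over the rows of the plan. -/
def primalObjective (ε lam₁ lam₂ : ℝ) (c : X → Y → ℝ) (μ : X → ℝ) (ν νm : Y → ℝ)
    (π : X → Y → ℝ) : ℝ :=
  (∑ x, ∑ y, c x y * π x y) + ε * (∑ x, klWeights (π x) (fun y => μ x * ν y))
    + lam₁ * klWeights (fstMarginal π) μ + lam₂ * klWeights (sndMarginal π + νm) ν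

/-- Dual objective `D_J(α, β | ν_{-J})`, with separate strengths `lam₁`, `lam₂` for the two
soft-marginal penalties. -/
def dualObjective (ε lam₁ lam₂ : ℝ) (c : X → Y → ℝ) (μ : X → ℝ) (ν νm : Y → ℝ)
    (α : X → ℝ) (β : Y → ℝ) : ℝ :=
  ε * (∑ x, ∑ y, (1 - Real.exp ((α x + β y - c x y) / ε)) * (μ x * ν y))
    - klConjugate lam₁ μ (-α) - klConjugate lam₂ ν (-β) - ∑ y, β y * νm y

end Definitions

section KullbackLeibler

variable {ι : Type*} [Fintype ι]

lemma mul_log_div_exp_mul {a b : ℝ} (t : ℝ) (hab : b = 0 → a = 0) :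
    a * Real.log (a / (Real.exp t * b)) = a * Real.log (a / b) - t * a := by
  rcases eq_or_ne a 0 with rfl | ha
  · simp
  · have hb : b ≠ 0 := mt hab ha
    rw [Real.log_div ha (mul_ne_zero (Real.exp_ne_zero t) hb),
      Real.log_mul (Real.exp_ne_zero t) hb, Real.log_exp, Real.log_div ha hb]
    ring

lemma klWeights_self (σ : ι → ℝ) : klWeights σ σ = 0 :=
  Finset.sum_eq_zero fun i _ => by
    rcases eq_or_ne (σ i) 0 with h | h <;> simp [h]

lemma klWeights_fenchelYoung_gap {lam : ℝ} (hlam : lam ≠ 0) (φ : ι → ℝ) {ρ σ : ι → ℝ}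
    (hρσ : ∀ i, σ i = 0 → ρ i = 0) :
    lam * klWeights ρ σ + klConjugate lam σ (-φ) + ∑ i, φ i * ρ i
      = lam * klWeights ρ (expTilt lam φ σ) := by
  simp only [klWeights, klConjugate, expTilt, Pi.neg_apply, Finset.mul_sum,
    ← Finset.sum_add_distrib]
  refine Finset.sum_congr rfl fun i _ => ?_
  have hlog := mul_log_div_exp_mul (-(φ i) / lam) (hρσ i)
  have hcancel : lam * (-(φ i) / lam) = -(φ i) := mul_div_cancel₀ _ hlam
  linear_combination -lam * hlog + ρ i * hcancel

end KullbackLeibler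

section Marginals

variable {X Y : Type*} [Fintype X] [Fintype Y]

lemma sum_mul_fstMarginal_add_sum_mul_sndMarginal (α : X → ℝ) (β : Y → ℝ)
    (π : X → Y → ℝ) :
    ∑ x, α x * fstMarginal π x + ∑ y, β y * sndMarginal π y
      = ∑ x, ∑ y, (α x + β y) * π x y := by
  simp only [fstMarginal, sndMarginal, Finset.mul_sum, add_mul, Finset.sum_add_distrib]
  rw [Finset.sum_comm (f := fun y x => β y * π x y)]

end Marginals

section ScalingPlan

variable {X Y : Type*} {ε : ℝ} (c : X → Y → ℝ) (μ : X → ℝ) (ν : Y → ℝ) (α : X → ℝ) (β : Y → ℝ)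

lemma mul_log_scalingPlan_div (hε : ε ≠ 0) (x : X) (y : Y) :
    ε * (scalingPlan ε c μ ν α β x y * Real.log (scalingPlan ε c μ ν α β x y / (μ x * ν y)))
      = (α x + β y - c x y) * scalingPlan ε c μ ν α β x y := by
  rcases eq_or_ne (μ x * ν y) 0 with h | h
  · simp [scalingPlan, h]
  · simp only [scalingPlan, mul_div_cancel_right₀ _ h, Real.log_exp]
    field_simp

variable {μ} in
lemma fstMarginal_scalingPlan_eq_zero [Fintype Y] {x : X} (hx : μ x = 0) :
    fstMarginal (scalingPlan ε c μ ν α β) x = 0 := by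
  simp [fstMarginal, scalingPlan, hx]

variable {ν} in
lemma sndMarginal_scalingPlan_eq_zero [Fintype X] {y : Y} (hy : ν y = 0) :
    sndMarginal (scalingPlan ε c μ ν α β) y = 0 := by
  simp [sndMarginal, scalingPlan, hy]

lemma sndMarginal_scalingPlan [Fintype X] (y : Y) :
    sndMarginal (scalingPlan ε c μ ν α β) y
      = Real.exp (β y / ε) * ν y * ∑ x, Real.exp ((α x - c x y) / ε) * μ x := by
  rw [sndMarginal, Finset.mul_sum]
  refine Finset.sum_congr rfl fun x _ => ?_
  have hsplit : (α x + β y - c x y) / ε = β y / ε + (α x - c x y) / ε := by ring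
  rw [scalingPlan, hsplit, Real.exp_add]
  ring

variable {c μ ν α β} in
lemma sndMarginal_scalingPlan_add_eq_expTilt [Fintype X] {lam : ℝ} {νm : Y → ℝ}
    {y : Y} (hν : ν y ≠ 0)
    (hhalf : Real.exp (-(β y) / ε) * (Real.exp (-(β y) / lam) - νm y / ν y)
      = ∑ x, Real.exp ((α x - c x y) / ε) * μ x) :
    sndMarginal (scalingPlan ε c μ ν α β) y + νm y = expTilt lam β ν y := by
  have hexp : Real.exp (β y / ε) * Real.exp (-(β y) / ε) = 1 := by
    rw [← Real.exp_add, neg_div, add_neg_cancel, Real.exp_zero]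
  have hdiv : νm y / ν y * ν y = νm y := div_mul_cancel₀ _ hν
  rw [sndMarginal_scalingPlan, ← hhalf, expTilt]
  linear_combination (ν y * (Real.exp (-(β y) / lam) - νm y / ν y)) * hexp - hdiv

variable [Fintype X] [Fintype Y]

lemma transport_add_entropy_sub_dual_scalingPlan (hε : ε ≠ 0) :
    (∑ x, ∑ y, c x y * scalingPlan ε c μ ν α β x y)
      + ε * (∑ x, klWeights (scalingPlan ε c μ ν α β x) (fun y => μ x * ν y))
      - ε * (∑ x, ∑ y, (1 - Real.exp ((α x + β y - c x y) / ε)) * (μ x * ν y))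
      = ∑ x, α x * fstMarginal (scalingPlan ε c μ ν α β) x
        + ∑ y, β y * sndMarginal (scalingPlan ε c μ ν α β) y := by
  rw [sum_mul_fstMarginal_add_sum_mul_sndMarginal]
  simp only [klWeights, Finset.mul_sum, ← Finset.sum_add_distrib, ← Finset.sum_sub_distrib]
  refine Finset.sum_congr rfl fun x _ => Finset.sum_congr rfl fun y _ => ?_
  have hlog := mul_log_scalingPlan_div c μ ν α β hε x y
  have hplan : scalingPlan ε c μ ν α β x y
      = Real.exp ((α x + β y - c x y) / ε) * (μ x * ν y) := rfl
  linear_combination hlog - ε * hplan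

theorem primal_dual_gap_formula_KL_general {lam₁ lam₂ : ℝ} (hε : ε ≠ 0) (hlam₁ : lam₁ ≠ 0)
    (hlam₂ : lam₂ ≠ 0) (νm : Y → ℝ) (hνm : ∀ y, ν y = 0 → νm y = 0) :
    primalObjective ε lam₁ lam₂ c μ ν νm (scalingPlan ε c μ ν α β)
        - dualObjective ε lam₁ lam₂ c μ ν νm α β
      = lam₁ * klWeights (fstMarginal (scalingPlan ε c μ ν α β)) (expTilt lam₁ α μ)
        + lam₂ * klWeights (sndMarginal (scalingPlan ε c μ ν α β) + νm) (expTilt lam₂ β ν) := by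
  set π := scalingPlan ε c μ ν α β
  have hgapX : lam₁ * klWeights (fstMarginal π) μ + klConjugate lam₁ μ (-α)
      + ∑ x, α x * fstMarginal π x = lam₁ * klWeights (fstMarginal π) (expTilt lam₁ α μ) :=
    klWeights_fenchelYoung_gap hlam₁ α fun _ =>
      fstMarginal_scalingPlan_eq_zero c ν α β
  have hgapY : lam₂ * klWeights (sndMarginal π + νm) ν + klConjugate lam₂ ν (-β)
      + ∑ y, β y * (sndMarginal π y + νm y)
      = lam₂ * klWeights (sndMarginal π + νm) (expTilt lam₂ β ν) :=
    klWeights_fenchelYoung_gap hlam₂ β fun y hy => by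
      rw [Pi.add_apply, sndMarginal_scalingPlan_eq_zero c μ α β hy, hνm y hy, add_zero]
  have hcoupling := transport_add_entropy_sub_dual_scalingPlan c μ ν α β hε
  simp only [mul_add, Finset.sum_add_distrib] at hgapY
  rw [primalObjective, dualObjective]
  linear_combination hcoupling + hgapX + hgapY

end ScalingPlan

/-- primal–dual gap formula for `λ·KL` soft-marginals. If the
potentials `(α, β)` satisfy the `Y`-half Sinkhorn iteration identity and `π` is
the associated diagonal-scaling plan, then
`E_J(π|ν_{-J}) − D_J(α,β|ν_{-J}) = λ·KL(P_X π | e^{−α/λ}·μ_J)`. -/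
theorem primal_dual_gap_formula_KL
    {X Y : Type*} [Fintype X] [Fintype Y] [Nonempty X] [Nonempty Y]
    (μ : X → ℝ) (ν : Y → ℝ) (hμ : ∀ x, 0 < μ x) (hν : ∀ y, 0 < ν y)
    (c : X → Y → ℝ) (ε lam : ℝ) (hε : 0 < ε) (hlam : 0 < lam)
    (νm : Y → ℝ) (hνm : ∀ y, 0 ≤ νm y)
    (α : X → ℝ) (β : Y → ℝ)
    -- the Y-half Sinkhorn iteration identity
    (hhalf : ∀ y, Real.exp (-(β y) / ε) * (Real.exp (-(β y) / lam) - νm y / ν y)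
      = ∑ x, Real.exp ((α x - c x y) / ε) * μ x) :
    -- the diagonal-scaling primal plan associated with (α, β)
    let π : X → Y → ℝ := fun x y =>
      Real.exp ((α x + β y - c x y) / ε) * (μ x * ν y)
    -- its marginals
    let ρX : X → ℝ := fun x => ∑ y, π x y
    let ρY : Y → ℝ := fun y => ∑ x, π x y
    -- primal objective E_J(π|ν_{-J}) with D₁ = D₂ = λ·KL
    let E : ℝ :=
      (∑ x, ∑ y, c x y * π x y)
      + ε * (∑ x, ∑ y,
          (π x y * Real.log (π x y / (μ x * ν y)) - π x y + μ x * ν y))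
      + lam * (∑ x, (ρX x * Real.log (ρX x / μ x) - ρX x + μ x))
      + lam * (∑ y, ((ρY y + νm y) * Real.log ((ρY y + νm y) / ν y)
          - (ρY y + νm y) + ν y))
    -- dual objective D_J(α, β|ν_{-J})
    let D : ℝ :=
      ε * (∑ x, ∑ y, (1 - Real.exp ((α x + β y - c x y) / ε)) * (μ x * ν y))
      - (∑ x, lam * (Real.exp (-(α x) / lam) - 1) * μ x)
      - (∑ y, lam * (Real.exp (-(β y) / lam) - 1) * ν y)
      - (∑ y, β y * νm y)
    E - D = lam * ∑ x, (ρX x * Real.log (ρX x / (Real.exp (-(α x) / lam) * μ x))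
        - ρX x + Real.exp (-(α x) / lam) * μ x) := by
  intro π ρX ρY E D
  have hgap : E - D = lam * klWeights ρX (expTilt lam α μ)
      + lam * klWeights (ρY + νm) (expTilt lam β ν) :=
    primal_dual_gap_formula_KL_general c μ ν α β hε.ne' hlam.ne' hlam.ne' νm
      fun y hy => absurd hy (hν y).ne'
  have hY : ρY + νm = expTilt lam β ν :=
    funext fun y => sndMarginal_scalingPlan_add_eq_expTilt (hν y).ne' (hhalf y)
  rw [hgap, hY, klWeights_self, mul_zero, add_zero]
  rfl

end
end
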